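/- For every pair of real numbers r ≥ s ≥ 0 there exists a constant C = C(r,s) > 0, independent of d, n, and the measure, with the following property. For all integers d ≥ 3 and n with nd ≥ (d+r+1)², and every Marcinkiewicz–Zygmund measure ν ∈ MZ(d; 2(d+2)n), one has sup_{x ∈ S^d} ∫_{S^d} |Φ̃_{d;n,r}(x·y)| (1−x·y)^{s/2} d|ν|(y) ≤ C · d^{1/6} · n^{−s} · |||ν|||_{d;2(d+2)n}. -/

import Mathlib

noncomputable section

open MeasureTheory Real Set
open scoped RealInnerProductSpace

/-- Value at `x` of the orthonormalized Jacobi polynomial `p_n^{(α,β)}`. -/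
def jacobiP (α β : ℝ) (n : ℕ) (x : ℝ) : ℝ :=
  Real.sqrt ((2 * (n : ℝ) + α + β + 1) / 2 ^ (α + β + 1) *
      (Real.Gamma ((n : ℝ) + α + β + 1) * (n.factorial : ℝ) /
        (Real.Gamma ((n : ℝ) + α + 1) * Real.Gamma ((n : ℝ) + β + 1)))) *
    (Real.Gamma (α + n + 1) / ((n.factorial : ℝ) * Real.Gamma (α + β + n + 1))) *
    ∑ m ∈ Finset.range (n + 1),
      (n.choose m : ℝ) * (Real.Gamma (α + β + n + m + 1) / Real.Gamma (α + m + 1)) *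
        ((x - 1) / 2) ^ m

/-- The kernel `K_n^{(α,β)}(x) = Σ_{ℓ<n} p_ℓ^{(α,β)}(1) p_ℓ^{(α,β)}(x)`. -/
def jacobiK (α β : ℝ) (n : ℕ) (x : ℝ) : ℝ :=
  ∑ ℓ ∈ Finset.range n, jacobiP α β ℓ 1 * jacobiP α β ℓ x

/-- The unit sphere `S^d ⊂ ℝ^{d+1}`. -/
abbrev Sph (d : ℕ) := Metric.sphere (0 : EuclideanSpace ℝ (Fin (d + 1))) 1

/-- The rotation invariant Riemannian volume probability measure `μ_d^*` on `S^d`. -/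
def sphMeasure (d : ℕ) : Measure (Sph d) :=
  ((volume : Measure (EuclideanSpace ℝ (Fin (d + 1)))).toSphere Set.univ)⁻¹ •
    (volume : Measure (EuclideanSpace ℝ (Fin (d + 1)))).toSphere

/-- `f : S^d → ℝ` is the restriction to the sphere of an algebraic polynomial in `d+1`
variables of total degree `< n`, i.e. `f ∈ Π_n^d`. -/
def IsSphPoly (d : ℕ) (n : ℝ) (f : Sph d → ℝ) : Prop :=
  ∃ p : MvPolynomial (Fin (d + 1)) ℝ, (p.totalDegree : ℝ) < n ∧
    ∀ y : Sph d, f y = MvPolynomial.eval (fun i => (y : EuclideanSpace ℝ (Fin (d + 1))) i) p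

/-- Integral of `f` with respect to a signed measure (via the Jordan decomposition). -/
def sInt {X : Type*} [MeasurableSpace X] (ν : SignedMeasure X) (f : X → ℝ) : ℝ :=
  (∫ x, f x ∂ν.toJordanDecomposition.posPart) - ∫ x, f x ∂ν.toJordanDecomposition.negPart

/-- Integral of `f` over a set `s` with respect to a signed measure. -/
def sIntOn {X : Type*} [MeasurableSpace X] (ν : SignedMeasure X) (s : Set X) (f : X → ℝ) : ℝ :=
  (∫ x in s, f x ∂ν.toJordanDecomposition.posPart) -
    ∫ x in s, f x ∂ν.toJordanDecomposition.negPart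

/-- `ν` is a quadrature measure of order `n` on `S^d`. -/
def IsQuadrature (d : ℕ) (n : ℝ) (ν : SignedMeasure (Sph d)) : Prop :=
  ∀ f : Sph d → ℝ, IsSphPoly d n f → sInt ν f = ∫ y, f y ∂sphMeasure d

/-- `ν` satisfies the Marcinkiewicz-Zygmund inequality of order `n` with constant `c`;
`ν ∈ MZ(d;n)` means this holds for some `c`, and `|||ν|||_{d;n}` is the least such `c`. -/
def IsMZ (d : ℕ) (n : ℝ) (ν : SignedMeasure (Sph d)) (c : ℝ) : Prop :=
  ∀ f : Sph d → ℝ, IsSphPoly d (n / 2) f →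
    (∫ y, (f y) ^ 2 ∂ν.totalVariation) ≤ c * ∫ y, (f y) ^ 2 ∂sphMeasure d

/-- `ω_d`, the volume of `S^d`. -/
def omegaS (d : ℕ) : ℝ := 2 * Real.pi ^ (((d : ℝ) + 1) / 2) / Real.Gamma (((d : ℝ) + 1) / 2)

/-- The reproducing kernel `K_{d;n}` of `Π_n^d`. -/
def sphK (d n : ℕ) (x : ℝ) : ℝ :=
  (omegaS d / omegaS (d - 1)) * jacobiK ((d : ℝ) / 2 - 1) ((d : ℝ) / 2 - 1) n x

/-- The kernel `Φ̃_{d;n,r}`. -/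
def PhiTilde (d n : ℕ) (r : ℝ) (x : ℝ) : ℝ :=
  sphK d ((d + 2) * n) x *
    (jacobiP ((d : ℝ) / 2 + r) ((d : ℝ) / 2 - 2) (d * n) x /
      jacobiP ((d : ℝ) / 2 + r) ((d : ℝ) / 2 - 2) (d * n) 1)

/-- The kernel `Φ_{d;n,r}`. -/
def Phi (d n : ℕ) (r : ℝ) (x : ℝ) : ℝ := PhiTilde d n r x * ((1 + x) / 2) ^ n

/-- The inner product `x·y` of two points of `S^d`. -/
def ip {d : ℕ} (x y : Sph d) : ℝ :=
  ⟪(x : EuclideanSpace ℝ (Fin (d + 1))), (y : EuclideanSpace ℝ (Fin (d + 1)))⟫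

/-- The operator `σ_{d;n,r}(ν, f)`. -/
def sigmaOp (d n : ℕ) (r : ℝ) (ν : SignedMeasure (Sph d)) (f : Sph d → ℝ) (x : Sph d) : ℝ :=
  sInt ν (fun y => f y * Phi d n r (ip x y))

/-- The operator `σ̃_{d;n,r}(ν, f)`. -/
def sigmaTildeOp (d n : ℕ) (r : ℝ) (ν : SignedMeasure (Sph d)) (f : Sph d → ℝ) (x : Sph d) : ℝ :=
  sInt ν (fun y => f y * PhiTilde d n r (ip x y))

/-- The uniform (supremum) norm `‖f‖_∞`. -/
def supNorm {X : Type*} (f : X → ℝ) : ℝ := sSup (Set.range fun x => |f x|)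

/-- `E_{d;n}(f)`, the degree of approximation of `f` from `Π_n^d` in the uniform norm. -/
def bestApprox (d : ℕ) (n : ℝ) (f : Sph d → ℝ) : ℝ :=
  sInf {t | ∃ g, IsSphPoly d n g ∧ ∀ y, |f y - g y| ≤ t}

/-- `dim Π_n^d = (2n+d−2)·Γ(n+d−1)/(Γ(n)·Γ(d+1))` (for `n ≥ 2`). -/
def dimPi (d n : ℕ) : ℝ :=
  (2 * (n : ℝ) + d - 2) * Real.Gamma ((n : ℝ) + d - 1) /
    (Real.Gamma n * Real.Gamma ((d : ℝ) + 1))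

/-! By the Cauchy–Schwarz inequality the integral is at most the geometric mean of the squared
`L²(|ν|)` norms of the reproducing kernel and of the normalized Jacobi factor times
`(1 - x·y) ^ (s / 2)`. The Marcinkiewicz–Zygmund inequality turns both into integrals over the
sphere, which are Beta integrals in `u = (1 - x·y) / 2`. For the second norm it becomes applicable
once `u ^ s` is majorized by a sum of squares of polynomials of degree `< 2 * n`; iterating the
logistic map `u ↦ 4 * u * (1 - u)` yields such a sum of size at most a constant times
`u ^ s + n ^ (-2 * s)`.

Let `Y` be the Jacobi polynomial with parameters `α = d / 2 + r` and `β = d / 2 - 2`. A Hardy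
inequality derived from the Jacobi differential equation bounds the integral of `Y ^ 2` against
`u ^ (α - b - 1) * (1 - u) ^ β`, for `0 ≤ b ≤ r`, by a constant times `n ^ (2 * b)` times the
integral with `b = 0`, and the latter is an explicit quotient of Gamma functions. Multiplied by the
value of the kernel at `1`, which is the dimension of a polynomial space, it is at most a constant
times `n ^ (-2 * r)`: the `d`-th powers of the two degrees `(d + 2) * n` and `d * n` enter with
opposite signs, and their quotient is bounded. -/

section BetaIntegrals

open Polynomial

variable {a b : ℝ}

/-- The weight `u^(a-1) (1-u)^(b-1)` of the Beta integral. -/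
def betaWeight (a b u : ℝ) : ℝ := u ^ (a - 1) * (1 - u) ^ (b - 1)

/-- The integral over `(0, 1)` of a polynomial against the Beta weight. -/
def betaInt (a b : ℝ) (p : ℝ[X]) : ℝ := ∫ u in Ioo (0 : ℝ) 1, p.eval u * betaWeight a b u

lemma betaWeight_pos {u : ℝ} (hu : u ∈ Ioo (0 : ℝ) 1) : 0 < betaWeight a b u :=
  mul_pos (rpow_pos_of_pos hu.1 _) (rpow_pos_of_pos (sub_pos.2 hu.2) _)

lemma rpow_mul_betaWeight {u : ℝ} (s : ℝ) (hu : 0 < u) :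
    u ^ s * betaWeight a b u = betaWeight (a + s) b u := by
  rw [betaWeight, betaWeight, ← mul_assoc, ← rpow_add hu]
  ring_nf

lemma betaWeight_anti {b' u : ℝ} (hb : b ≤ b') (hu : u ∈ Ioo (0 : ℝ) 1) :
    betaWeight a b' u ≤ betaWeight a b u :=
  mul_le_mul_of_nonneg_left
    (rpow_le_rpow_of_exponent_ge (sub_pos.2 hu.2) (by linarith [hu.1]) (by linarith))
    (rpow_nonneg hu.1.le _)

lemma ofReal_betaWeight {u : ℝ} (hu : u ∈ Ioo (0 : ℝ) 1) :
    (betaWeight a b u : ℂ) = (u : ℂ) ^ ((a : ℂ) - 1) * (1 - (u : ℂ)) ^ ((b : ℂ) - 1) := by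
  rw [betaWeight, Complex.ofReal_mul, Complex.ofReal_cpow hu.1.le,
    Complex.ofReal_cpow (sub_nonneg.2 hu.2.le)]
  push_cast
  rfl

lemma integrableOn_betaWeight (ha : 0 < a) (hb : 0 < b) :
    IntegrableOn (betaWeight a b) (Ioo 0 1) := by
  have h := Complex.betaIntegral_convergent (u := a) (v := b) (by simpa) (by simpa)
  rw [intervalIntegrable_iff_integrableOn_Ioo_of_le zero_le_one] at h
  refine (integrableOn_congr_fun (fun u hu => ?_) measurableSet_Ioo).mp h.re
  simp only [← ofReal_betaWeight hu, RCLike.re_to_complex, Complex.ofReal_re]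

lemma integral_betaWeight (ha : 0 < a) (hb : 0 < b) :
    ∫ u in Ioo (0 : ℝ) 1, betaWeight a b u = Gamma a * Gamma b / Gamma (a + b) := by
  have hbeta : Complex.betaIntegral a b = ((∫ u in Ioo (0 : ℝ) 1, betaWeight a b u : ℝ) : ℂ) := by
    rw [Complex.betaIntegral, intervalIntegral.integral_of_le zero_le_one,
      integral_Ioc_eq_integral_Ioo, ← integral_complex_ofReal]
    exact setIntegral_congr_fun measurableSet_Ioo fun u hu => (ofReal_betaWeight hu).symm
  have h := ProbabilityTheory.beta_eq_betaIntegralReal a b ha hb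
  rwa [ProbabilityTheory.beta, hbeta, Complex.ofReal_re, eq_comm] at h

lemma integrableOn_mul_betaWeight (ha : 0 < a) (hb : 0 < b) {f : ℝ → ℝ} (hf : Continuous f) :
    IntegrableOn (fun u => f u * betaWeight a b u) (Ioo 0 1) := by
  obtain ⟨C, hC⟩ := isCompact_Icc.exists_bound_of_continuousOn (s := Icc (0 : ℝ) 1) hf.continuousOn
  refine Integrable.bdd_mul (c := C) (integrableOn_betaWeight ha hb) hf.aestronglyMeasurable ?_
  filter_upwards [ae_restrict_mem measurableSet_Ioo] with u hu
  exact hC u (Ioo_subset_Icc_self hu)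

lemma integrableOn_eval_mul_betaWeight (ha : 0 < a) (hb : 0 < b) (p : ℝ[X]) :
    IntegrableOn (fun u => p.eval u * betaWeight a b u) (Ioo 0 1) :=
  integrableOn_mul_betaWeight ha hb p.continuous

lemma betaInt_add (ha : 0 < a) (hb : 0 < b) (p q : ℝ[X]) :
    betaInt a b (p + q) = betaInt a b p + betaInt a b q := by
  simp only [betaInt, eval_add, add_mul]
  exact integral_add (integrableOn_eval_mul_betaWeight ha hb p)
    (integrableOn_eval_mul_betaWeight ha hb q)

lemma betaInt_C_mul (k : ℝ) (p : ℝ[X]) : betaInt a b (C k * p) = k * betaInt a b p := by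
  simp only [betaInt, eval_mul, eval_C, mul_assoc]
  exact integral_const_mul k _

lemma betaInt_sub (ha : 0 < a) (hb : 0 < b) (p q : ℝ[X]) :
    betaInt a b (p - q) = betaInt a b p - betaInt a b q := by
  rw [show p - q = p + C (-1) * q by rw [C_neg, C_1]; ring, betaInt_add ha hb, betaInt_C_mul]
  ring

lemma betaInt_sum (ha : 0 < a) (hb : 0 < b) {ι : Type*} (s : Finset ι) (p : ι → ℝ[X]) :
    betaInt a b (∑ i ∈ s, p i) = ∑ i ∈ s, betaInt a b (p i) := by
  simp only [betaInt, eval_finsetSum, Finset.sum_mul]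
  exact integral_finsetSum s fun i _ => integrableOn_eval_mul_betaWeight ha hb (p i)

lemma betaInt_X_pow_mul (k : ℕ) (p : ℝ[X]) :
    betaInt a b (X ^ k * p) = betaInt (a + k) b p := by
  refine setIntegral_congr_fun measurableSet_Ioo fun u hu => ?_
  simp only [eval_mul, eval_pow, eval_X]
  rw [← rpow_mul_betaWeight k hu.1, rpow_natCast]
  ring

lemma betaInt_X_mul (p : ℝ[X]) : betaInt a b (X * p) = betaInt (a + 1) b p := by
  simpa using betaInt_X_pow_mul (a := a) (b := b) 1 p

lemma betaInt_one (ha : 0 < a) (hb : 0 < b) :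
    betaInt a b 1 = Gamma a * Gamma b / Gamma (a + b) := by
  simpa [betaInt] using integral_betaWeight ha hb

lemma betaInt_X_pow (ha : 0 < a) (hb : 0 < b) (k : ℕ) :
    betaInt a b (X ^ k) = Gamma (a + k) * Gamma b / Gamma (a + k + b) := by
  rw [← mul_one (X ^ k), betaInt_X_pow_mul, betaInt_one (by positivity) hb]

lemma betaInt_nonneg {p : ℝ[X]} (hp : ∀ u ∈ Ioo (0 : ℝ) 1, 0 ≤ p.eval u) : 0 ≤ betaInt a b p :=
  setIntegral_nonneg measurableSet_Ioo fun u hu => mul_nonneg (hp u hu) (betaWeight_pos hu).le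

lemma betaInt_sq_nonneg (p : ℝ[X]) : 0 ≤ betaInt a b (p ^ 2) :=
  betaInt_nonneg fun u _ => by simpa only [eval_pow] using sq_nonneg (p.eval u)

lemma betaInt_one_pos (ha : 0 < a) (hb : 0 < b) : 0 < betaInt a b 1 := by
  rw [betaInt_one ha hb]
  have := Gamma_pos_of_pos ha
  have := Gamma_pos_of_pos hb
  have := Gamma_pos_of_pos (add_pos ha hb)
  positivity

end BetaIntegrals

section AlternatingSums

open Polynomial

lemma sum_choose_neg_one_pow_eval_eq_zero {S : ℝ[X]} {n : ℕ} (hS : S.natDegree < n) :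
    ∑ m ∈ Finset.range (n + 1), (n.choose m : ℝ) * (-1) ^ m * S.eval (m : ℝ) = 0 := by
  have h := congrFun (fwdDiff_iter_eq_zero_of_degree_lt hS) 0
  rw [fwdDiff_iter_eq_sum_shift] at h
  simp only [Pi.zero_apply, zsmul_eq_mul, Int.cast_mul, Int.cast_pow, Int.cast_neg, Int.cast_one,
    Int.cast_natCast, nsmul_eq_mul, mul_one, zero_add] at h
  rw [← mul_eq_zero_of_right ((-1) ^ n) h, Finset.mul_sum]
  refine Finset.sum_congr rfl fun m hm => ?_
  obtain ⟨j, rfl⟩ := Nat.exists_eq_add_of_le (Finset.mem_range_succ_iff.1 hm)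
  have hj : (-1 : ℝ) ^ j * (-1) ^ j = 1 := by rw [← mul_pow]; norm_num
  rw [Nat.add_sub_cancel_left, pow_add]
  linear_combination (-(((m + j).choose m : ℝ)) * (-1) ^ m * S.eval (m : ℝ)) * hj

lemma betaInt_one_sub_X_pow {z : ℝ} (hz : 0 < z) (n : ℕ) :
    betaInt z 1 ((1 - X) ^ n) = n.factorial * Gamma z / Gamma (z + n + 1) := by
  have h := integral_betaWeight hz (show (0 : ℝ) < n + 1 by positivity)
  rw [Gamma_nat_eq_factorial, ← add_assoc, mul_comm] at h
  rw [← h]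
  refine setIntegral_congr_fun measurableSet_Ioo fun u _ => ?_
  simp [betaWeight, mul_comm]

lemma sum_choose_neg_one_pow_div (n : ℕ) {z : ℝ} (hz : 0 < z) :
    ∑ m ∈ Finset.range (n + 1), (n.choose m : ℝ) * (-1) ^ m * (1 / ((m : ℝ) + z))
      = n.factorial * Gamma z / Gamma (z + n + 1) := by
  have hexpand : ((1 : ℝ[X]) - X) ^ n =
      ∑ m ∈ Finset.range (n + 1), C ((n.choose m : ℝ) * (-1) ^ m) * X ^ m := by
    rw [sub_eq_neg_add, add_pow]
    refine Finset.sum_congr rfl fun m _ => ?_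
    rw [neg_pow]
    simp only [one_pow, mul_one, map_mul, map_pow, map_neg, map_one, map_natCast]
    ring
  rw [← betaInt_one_sub_X_pow hz, hexpand, betaInt_sum hz one_pos]
  refine Finset.sum_congr rfl fun m _ => ?_
  have hzm : 0 < z + m := by positivity
  rw [betaInt_C_mul, betaInt_X_pow hz one_pos, Gamma_one, mul_one, Gamma_add_one hzm.ne',
    div_mul_cancel_right₀ (Gamma_pos_of_pos hzm).ne', add_comm z, one_div]

lemma sum_choose_neg_one_pow_eval_div {R : ℝ[X]} {n : ℕ} (hR : R.natDegree ≤ n) {z : ℝ}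
    (hz : 0 < z) :
    ∑ m ∈ Finset.range (n + 1), (n.choose m : ℝ) * (-1) ^ m * (R.eval (m : ℝ) / ((m : ℝ) + z))
      = R.eval (-z) * (n.factorial * Gamma z / Gamma (z + n + 1)) := by
  obtain ⟨S, hS⟩ := X_sub_C_dvd_sub_C_eval (a := -z) (p := R)
  have hRS (t : ℝ) : R.eval t = R.eval (-z) + (t + z) * S.eval t := by
    have h := congrArg (eval t) hS
    simp only [eval_sub, eval_C, eval_mul, eval_X, sub_neg_eq_add] at h
    linarith
  have hsum : ∑ m ∈ Finset.range (n + 1), (n.choose m : ℝ) * (-1) ^ m * S.eval (m : ℝ) = 0 := by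
    by_cases hS0 : S = 0
    · simp [hS0]
    · refine sum_choose_neg_one_pow_eval_eq_zero ?_
      have hdeg : (R - C (R.eval (-z))).natDegree ≤ n := by rwa [natDegree_sub_C]
      rw [hS, natDegree_mul (X_sub_C_ne_zero _) hS0, natDegree_X_sub_C] at hdeg
      omega
  rw [← sum_choose_neg_one_pow_div n hz, Finset.mul_sum, ← sub_eq_zero, ← Finset.sum_sub_distrib,
    ← hsum]
  refine Finset.sum_congr rfl fun m _ => ?_
  have hmz : (m : ℝ) + z ≠ 0 := by positivity
  rw [hRS m]
  field_simp
  ring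

end AlternatingSums

section JacobiPolynomials

open Polynomial

/-- The coefficients, in powers of `u = (1 - x) / 2`, of the unnormalized Jacobi polynomial
`∑ m, jacobiCoeff α β N m * u ^ m`, which is the sum occurring in `jacobiP`. -/
def jacobiCoeff (α β : ℝ) (N m : ℕ) : ℝ :=
  N.choose m * (Gamma (α + β + N + m + 1) / Gamma (α + m + 1)) * (-1) ^ m

/-- The unnormalized Jacobi polynomial in the variable `u = (1 - x) / 2`. -/
def shiftedJacobi (α β : ℝ) (N : ℕ) : ℝ[X] :=
  ∑ m ∈ Finset.range (N + 1), C (jacobiCoeff α β N m) * X ^ m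

/-- The factor relating `jacobiP` to `shiftedJacobi`. -/
def jacobiScale (α β : ℝ) (n : ℕ) : ℝ :=
  √((2 * (n : ℝ) + α + β + 1) / 2 ^ (α + β + 1) *
      (Gamma ((n : ℝ) + α + β + 1) * (n.factorial : ℝ) /
        (Gamma ((n : ℝ) + α + 1) * Gamma ((n : ℝ) + β + 1)))) *
    (Gamma (α + n + 1) / ((n.factorial : ℝ) * Gamma (α + β + n + 1)))

variable {α β : ℝ}

lemma jacobiCoeff_eq_zero {N m : ℕ} (h : N < m) : jacobiCoeff α β N m = 0 := by
  simp [jacobiCoeff, Nat.choose_eq_zero_of_lt h]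

lemma coeff_shiftedJacobi (N m : ℕ) : (shiftedJacobi α β N).coeff m = jacobiCoeff α β N m := by
  simp only [shiftedJacobi, finsetSum_coeff, coeff_C_mul_X_pow, Finset.sum_ite_eq,
    Finset.mem_range_succ_iff]
  split_ifs with h
  · rfl
  · exact (jacobiCoeff_eq_zero (not_le.1 h)).symm

lemma natDegree_shiftedJacobi_le (N : ℕ) : (shiftedJacobi α β N).natDegree ≤ N :=
  natDegree_le_iff_coeff_eq_zero.2 fun m hm => by
    rw [coeff_shiftedJacobi, jacobiCoeff_eq_zero hm]

lemma eval_shiftedJacobi_zero (N : ℕ) :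
    (shiftedJacobi α β N).eval 0 = Gamma (α + β + N + 1) / Gamma (α + 1) := by
  rw [← coeff_zero_eq_eval_zero, coeff_shiftedJacobi]
  simp [jacobiCoeff]

lemma jacobiP_eq_eval (n : ℕ) (x : ℝ) :
    jacobiP α β n x = jacobiScale α β n * (shiftedJacobi α β n).eval ((1 - x) / 2) := by
  rw [jacobiP, jacobiScale, shiftedJacobi, eval_finsetSum]
  congr 1
  refine Finset.sum_congr rfl fun m _ => ?_
  rw [eval_C_mul, eval_X_pow, jacobiCoeff, mul_assoc _ ((-1 : ℝ) ^ m), ← mul_pow]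
  ring_nf

lemma Gamma_add_natCast {x : ℝ} (hx : 0 < x) (k : ℕ) :
    Gamma (x + k) = (ascPochhammer ℝ k).eval x * Gamma x := by
  induction k with
  | zero => simp
  | succ k ih =>
    rw [Nat.cast_succ, ← add_assoc, Gamma_add_one (by positivity), ih, ascPochhammer_succ_eval]
    ring

lemma eval_ascPochhammer_neg_add (l : ℕ) (x : ℝ) :
    (ascPochhammer ℝ l).eval (-(x + l)) = (-1) ^ l * (ascPochhammer ℝ l).eval (x + 1) := by
  rw [ascPochhammer_eval_neg_eq_descPochhammer, descPochhammer_eval_eq_ascPochhammer]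
  ring_nf

-- Whenever the Gamma quotients in the `m`-th term form a rational function `R(m) / (m + z)`,
-- partial fractions evaluate the alternating sum over `m`.
lemma betaInt_shiftedJacobi {a b z : ℝ} (ha : 0 < a) (hb : 0 < b) (hz : 0 < z) {N : ℕ} {R : ℝ[X]}
    (hR : R.natDegree ≤ N)
    (hGamma : ∀ m : ℕ, Gamma (α + β + N + m + 1) / Gamma (α + m + 1) *
      (Gamma (a + m) / Gamma (a + m + b)) = R.eval (m : ℝ) / (m + z)) :
    betaInt a b (shiftedJacobi α β N)
      = Gamma b * (R.eval (-z) * (N.factorial * Gamma z / Gamma (z + N + 1))) := by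
  rw [shiftedJacobi, betaInt_sum ha hb, ← sum_choose_neg_one_pow_eval_div hR hz, Finset.mul_sum]
  refine Finset.sum_congr rfl fun m _ => ?_
  rw [betaInt_C_mul, betaInt_X_pow ha hb, ← hGamma, jacobiCoeff]
  ring

lemma Gamma_quotient_moment (hα : -1 < α) (hs : 0 < α + β + 1) {k l : ℕ} (hk : k ≤ l) (m : ℕ) :
    Gamma (α + β + l + m + 1) / Gamma (α + m + 1) *
        (Gamma (α + 1 + k + m) / Gamma (α + 1 + k + m + (β + 1))) =
      ((ascPochhammer ℝ k).eval (α + m + 1) *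
        (ascPochhammer ℝ (l - k)).eval (α + β + m + k + 1)) / (m + (α + β + k + 1)) := by
  have : (0 : ℝ) ≤ m := m.cast_nonneg
  have : (0 : ℝ) ≤ k := k.cast_nonneg
  have hx : 0 < α + m + 1 := by linarith
  have hy : 0 < α + β + m + k + 1 := by linarith
  have := Gamma_pos_of_pos hx
  have := Gamma_pos_of_pos hy
  rw [show α + β + l + m + 1 = α + β + m + k + 1 + (l - k : ℕ) by push_cast [hk]; ring,
    show α + 1 + k + m = α + m + 1 + k by ring,
    show α + m + 1 + k + (β + 1) = α + β + m + k + 1 + 1 by ring,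
    show (m : ℝ) + (α + β + k + 1) = α + β + m + k + 1 by ring,
    Gamma_add_natCast hx, Gamma_add_natCast hy, Gamma_add_one hy.ne']
  field_simp

lemma betaInt_X_pow_mul_shiftedJacobi (hα : -1 < α) (hβ : -1 < β) (hs : 0 < α + β + 1) {k l : ℕ}
    (hk : k ≤ l) :
    betaInt (α + 1) (β + 1) (X ^ k * shiftedJacobi α β l) =
      if k = l then (-1) ^ l * (Gamma (β + l + 1) *
        (l.factorial * Gamma (α + β + l + 1) / Gamma (α + β + 2 * l + 2))) else 0 := by
  have : (0 : ℝ) ≤ k := k.cast_nonneg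
  have hR : (taylor (α + 1) (ascPochhammer ℝ k) *
      taylor (α + β + k + 1) (ascPochhammer ℝ (l - k))).natDegree ≤ l := by
    refine natDegree_mul_le.trans ?_
    simp only [natDegree_taylor, ascPochhammer_natDegree]
    omega
  rw [betaInt_X_pow_mul, betaInt_shiftedJacobi (z := α + β + k + 1) (by linarith) (by linarith)
    (by linarith) hR fun m => ?_]
  · rw [eval_mul, taylor_eval, taylor_eval, neg_add_cancel, ascPochhammer_eval_zero,
      show -(α + β + k + 1) + (α + 1) = -(β + k) by ring]
    split_ifs with h₁ h₂ h₂
    · subst h₂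
      rw [eval_ascPochhammer_neg_add, show β + k + 1 = β + 1 + k by ring,
        Gamma_add_natCast (show 0 < β + 1 by linarith)]
      ring_nf
    · omega
    · omega
    · ring
  · rw [Gamma_quotient_moment hα hs hk, eval_mul, taylor_eval, taylor_eval]
    ring_nf

lemma betaInt_mul_shiftedJacobi (hα : -1 < α) (hβ : -1 < β) (hs : 0 < α + β + 1) {l : ℕ} {q : ℝ[X]}
    (hq : q.natDegree ≤ l) :
    betaInt (α + 1) (β + 1) (q * shiftedJacobi α β l) =
      q.coeff l * ((-1) ^ l * (Gamma (β + l + 1) *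
        (l.factorial * Gamma (α + β + l + 1) / Gamma (α + β + 2 * l + 2)))) := by
  nth_rw 1 [q.as_sum_range_C_mul_X_pow' (Nat.lt_succ_of_le hq)]
  rw [Finset.sum_mul, betaInt_sum (by linarith) (by linarith),
    Finset.sum_eq_single_of_mem l (Finset.self_mem_range_succ l)]
  · rw [mul_assoc, betaInt_C_mul, betaInt_X_pow_mul_shiftedJacobi hα hβ hs le_rfl, if_pos rfl]
  · intro k hk hkl
    rw [mul_assoc, betaInt_C_mul, betaInt_X_pow_mul_shiftedJacobi hα hβ hs
      (Finset.mem_range_succ_iff.1 hk), if_neg hkl, mul_zero]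

lemma betaInt_shiftedJacobi_sq (hα : -1 < α) (hβ : -1 < β) (hs : 0 < α + β + 1) (l : ℕ) :
    betaInt (α + 1) (β + 1) (shiftedJacobi α β l ^ 2) =
      Gamma (β + l + 1) * l.factorial * Gamma (α + β + l + 1) /
        (Gamma (α + l + 1) * (α + β + 2 * l + 1)) := by
  have : (0 : ℝ) ≤ l := l.cast_nonneg
  have hx : 0 < α + β + 2 * l + 1 := by linarith
  have := Gamma_pos_of_pos hx
  have := Gamma_pos_of_pos (show 0 < α + l + 1 by linarith)
  have hsign : ((-1 : ℝ) ^ l) * (-1) ^ l = 1 := by rw [← mul_pow]; norm_num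
  rw [sq, betaInt_mul_shiftedJacobi hα hβ hs (natDegree_shiftedJacobi_le l), coeff_shiftedJacobi,
    jacobiCoeff, Nat.choose_self, Nat.cast_one, one_mul,
    show α + β + l + l + 1 = α + β + 2 * l + 1 by ring,
    show α + β + 2 * l + 2 = α + β + 2 * l + 1 + 1 by ring, Gamma_add_one hx.ne']
  field_simp
  linear_combination (Gamma (β + l + 1) * Gamma (α + β + l + 1)) * hsign

lemma betaInt_shiftedJacobi_self (hα : 0 < α) (hβ : -1 < β) (N : ℕ) :
    betaInt α (β + 1) (shiftedJacobi α β N) =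
      Gamma (β + N + 1) * N.factorial * Gamma α / Gamma (α + N + 1) := by
  rw [betaInt_shiftedJacobi hα (by linarith) hα
    (R := taylor (α + β + 1) (ascPochhammer ℝ N)) (by simp) fun m => ?_]
  · rw [taylor_eval, show -α + (α + β + 1) = β + 1 by ring, show β + N + 1 = β + 1 + N by ring,
      Gamma_add_natCast (show 0 < β + 1 by linarith)]
    ring
  · have : (0 : ℝ) ≤ m := m.cast_nonneg
    have hx : 0 < α + m := by positivity
    have hy : 0 < α + β + m + 1 := by linarith
    have := Gamma_pos_of_pos hx
    have := Gamma_pos_of_pos hy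
    rw [taylor_eval, show α + β + N + m + 1 = α + β + m + 1 + N by ring,
      show α + m + (β + 1) = α + β + m + 1 by ring,
      show (m : ℝ) + (α + β + 1) = α + β + m + 1 by ring, add_comm (m : ℝ) α,
      Gamma_add_one hx.ne', Gamma_add_natCast hy]
    field_simp

lemma betaInt_inv_shiftedJacobi_sq (hα : 0 < α) (hβ : -1 < β) (N : ℕ) :
    betaInt α (β + 1) (shiftedJacobi α β N ^ 2) =
      (shiftedJacobi α β N).eval 0 *
        (Gamma (β + N + 1) * N.factorial * Gamma α / Gamma (α + N + 1)) := by
  set Y := shiftedJacobi α β N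
  have hsplit : Y ^ 2 = X * (Y.divX * Y) + C (Y.eval 0) * Y := by
    rw [← coeff_zero_eq_eval_zero]
    linear_combination (-Y) * divX_mul_X_add Y
  have hlead : Y.divX.coeff N = 0 := by
    rw [coeff_divX, coeff_shiftedJacobi, jacobiCoeff_eq_zero N.lt_succ_self]
  rw [hsplit, betaInt_add hα (by linarith), betaInt_X_mul, betaInt_C_mul,
    betaInt_mul_shiftedJacobi (by linarith) hβ (by linarith)
      (natDegree_divX_le.trans (natDegree_shiftedJacobi_le N)), hlead, zero_mul, zero_add,
    betaInt_shiftedJacobi_self hα hβ]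

lemma jacobiCoeff_succ (hα : -1 < α) (hs : 0 < α + β + 1) (N n : ℕ) :
    ((n : ℝ) + 1) * (n + 1 + α) * jacobiCoeff α β N (n + 1)
      = (n - N) * (n + N + α + β + 1) * jacobiCoeff α β N n := by
  have : (0 : ℝ) ≤ n := n.cast_nonneg
  have : (0 : ℝ) ≤ N := N.cast_nonneg
  have hx : 0 < α + n + 1 := by linarith
  have hy : 0 < α + β + N + n + 1 := by linarith
  have := Gamma_pos_of_pos hx
  have hchoose : (N.choose (n + 1) : ℝ) * (n + 1) = N.choose n * (N - n) := by
    rcases le_or_gt n N with h | h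
    · rw [← Nat.cast_sub h]
      exact_mod_cast Nat.choose_succ_right_eq N n
    · simp [Nat.choose_eq_zero_of_lt h, Nat.choose_eq_zero_of_lt (Nat.lt_succ_of_lt h)]
  rw [jacobiCoeff, jacobiCoeff, Nat.cast_succ,
    show α + β + N + (n + 1 : ℝ) + 1 = α + β + N + n + 1 + 1 by ring,
    show α + (n + 1 : ℝ) + 1 = α + n + 1 + 1 by ring,
    Gamma_add_one hx.ne', Gamma_add_one hy.ne', pow_succ]
  field_simp
  linear_combination (-(α + β + N + n + 1) * (α + n + 1)) * hchoose

lemma coeff_X_mul_derivative (p : ℝ[X]) (n : ℕ) : (X * derivative p).coeff n = n * p.coeff n := by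
  cases n with
  | zero => simp
  | succ k => rw [coeff_X_mul, coeff_derivative, Nat.cast_succ, mul_comm]

lemma shiftedJacobi_ode (hα : -1 < α) (hs : 0 < α + β + 1) (N : ℕ) :
    X * (1 - X) * derivative (derivative (shiftedJacobi α β N))
      + (C (α + 1) - C (α + β + 2) * X) * derivative (shiftedJacobi α β N)
      + C (N * (N + α + β + 1)) * shiftedJacobi α β N = 0 := by
  set Y := shiftedJacobi α β N with hY
  -- `X² Y'' = X (X Y')' - X Y'`, so that all coefficients come from `coeff_X_mul_derivative`.
  have hrw : X * (1 - X) * derivative (derivative Y)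
        + (C (α + 1) - C (α + β + 2) * X) * derivative Y + C (N * (N + α + β + 1)) * Y
      = X * derivative (derivative Y) + C (α + 1) * derivative Y - X * derivative (X * derivative Y)
        - C (α + β + 1) * (X * derivative Y) + C (N * (N + α + β + 1)) * Y := by
    simp only [derivative_mul, derivative_X, C_add, C_ofNat, C_1]
    ring
  rw [hrw]
  ext n
  simp only [coeff_add, coeff_sub, coeff_C_mul, coeff_X_mul_derivative, coeff_derivative,
    coeff_zero, hY, coeff_shiftedJacobi]
  linear_combination jacobiCoeff_succ hα hs N n

end JacobiPolynomials

section HardyInequality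

open Polynomial

lemma hasDerivAt_rpow_mul_one_sub_rpow_mul_eval {a b u : ℝ} (hu : u ∈ Ioo (0 : ℝ) 1) (q : ℝ[X]) :
    HasDerivAt (fun u => u ^ a * (1 - u) ^ b * q.eval u)
      ((C a * (1 - X) * q - C b * X * q + X * (1 - X) * derivative q).eval u * betaWeight a b u)
      u := by
  have hu' : 0 < 1 - u := sub_pos.2 hu.2
  have h₁ : HasDerivAt (fun u : ℝ => u ^ a) (a * u ^ (a - 1)) u :=
    hasDerivAt_rpow_const (Or.inl hu.1.ne')
  have h₂ : HasDerivAt (fun u : ℝ => (1 - u) ^ b) (-1 * b * (1 - u) ^ (b - 1)) u :=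
    ((hasDerivAt_id u).const_sub 1).rpow_const (Or.inl hu'.ne')
  refine ((h₁.mul h₂).mul (q.hasDerivAt u)).congr_deriv ?_
  have e₁ : u ^ a = u * u ^ (a - 1) := by rw [rpow_sub_one hu.1.ne', mul_div_cancel₀ _ hu.1.ne']
  have e₂ : (1 - u) ^ b = (1 - u) * (1 - u) ^ (b - 1) := by
    rw [rpow_sub_one hu'.ne', mul_div_cancel₀ _ hu'.ne']
  simp only [Pi.mul_apply, eval_add, eval_sub, eval_mul, eval_C, eval_X, eval_one, betaWeight]
  rw [e₁, e₂]
  ring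

lemma betaInt_integration_by_parts {a b : ℝ} (ha : 0 < a) (hb : 0 < b) (q : ℝ[X]) :
    betaInt a b (C a * (1 - X) * q - C b * X * q + X * (1 - X) * derivative q) = 0 := by
  have hcont : ContinuousOn (fun u : ℝ => u ^ a * (1 - u) ^ b * q.eval u) (Icc 0 1) :=
    (((continuous_id.rpow_const fun _ => Or.inr ha.le).mul
      ((continuous_const.sub continuous_id).rpow_const fun _ => Or.inr hb.le)).mul
        q.continuous).continuousOn
  have h := intervalIntegral.integral_eq_sub_of_hasDerivAt_of_le zero_le_one hcont
    (fun u hu => hasDerivAt_rpow_mul_one_sub_rpow_mul_eval hu q)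
    ((intervalIntegrable_iff_integrableOn_Ioo_of_le zero_le_one).2
      (integrableOn_eval_mul_betaWeight ha hb _))
  rw [intervalIntegral.integral_of_le zero_le_one, integral_Ioc_eq_integral_Ioo] at h
  simpa [betaInt, ha.ne', hb.ne'] using h

variable {α β : ℝ}

-- Integrate by parts against `q = u Y Y' + (α / 2) Y²`; by the differential equation the integrand
-- is the difference of the two sides plus the square `(1 - u) (u Y' + ((α - a) / 2) Y)²`.
lemma hardy_shiftedJacobi {a : ℝ} (hα : 0 < α) (hβ : -1 < β) (ha : a < α) (N : ℕ) :
    (α ^ 2 - a ^ 2) / 4 * betaInt (α - a) (β + 1) (shiftedJacobi α β N ^ 2)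
      ≤ (N * (N + α + β + 1) + (α ^ 2 - a ^ 2) / 4 + α * (β + 1) / 2) *
        betaInt (α - a + 1) (β + 1) (shiftedJacobi α β N ^ 2) := by
  have hA : 0 < α - a := sub_pos.2 ha
  have hB : 0 < β + 1 := by linarith
  set Y := shiftedJacobi α β N
  set q := X * Y * derivative Y + C (α / 2) * Y ^ 2
  set S := (1 - X) * (X * derivative Y + C ((α - a) / 2) * Y) ^ 2
  set M := N * (N + α + β + 1) + (α ^ 2 - a ^ 2) / 4 + α * (β + 1) / 2 with hM
  have hode := shiftedJacobi_ode (show -1 < α by linarith) (show 0 < α + β + 1 by linarith) N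
  have hidentity : C ((α ^ 2 - a ^ 2) / 4) * Y ^ 2 + S - C M * (X * Y ^ 2) =
      C (α - a) * (1 - X) * q - C (β + 1) * X * q + X * (1 - X) * derivative q := by
    refine Polynomial.funext fun u => ?_
    have hode_u := congrArg (eval u) hode
    simp only [eval_add, eval_sub, eval_mul, eval_C, eval_X, eval_one, eval_zero] at hode_u
    simp only [S, q, derivative_add, derivative_mul, derivative_X, derivative_C, derivative_pow,
      eval_add, eval_sub, eval_mul, eval_pow, eval_C, eval_X, eval_one, eval_zero, hM]
    norm_num
    linear_combination (-(u * Y.eval u)) * hode_u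
  have hS : 0 ≤ betaInt (α - a) (β + 1) S := betaInt_nonneg fun u hu => by
    simp only [S, eval_mul, eval_sub, eval_one, eval_X, eval_pow]
    exact mul_nonneg (sub_nonneg.2 hu.2.le) (sq_nonneg _)
  have hibp := betaInt_integration_by_parts hA hB q
  rw [← hidentity, betaInt_sub hA hB, betaInt_add hA hB, betaInt_C_mul, betaInt_C_mul,
    betaInt_X_mul] at hibp
  linarith

lemma betaInt_shiftedJacobi_sq_sub_natCast_le {Λ δ : ℝ} (hα : 0 < α) (hβ : -1 < β) (N K : ℕ)
    (hΛ : N * (N + α + β + 1) + α ^ 2 / 4 + α * (β + 1) / 2 ≤ Λ) (hδ : 0 < δ)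
    (hK : ∀ j : ℕ, j ≤ K → (j : ℝ) < α ∧ δ ≤ (α ^ 2 - j ^ 2) / 4) :
    betaInt (α - K) (β + 1) (shiftedJacobi α β N ^ 2)
      ≤ (Λ / δ) ^ K * betaInt α (β + 1) (shiftedJacobi α β N ^ 2) := by
  have hΛ₀ : 0 ≤ Λ := by
    have : 0 ≤ (N : ℝ) * (N + α + β + 1) := by
      have : 0 < β + 1 := by linarith
      rw [add_assoc]
      positivity
    have : 0 ≤ α * (β + 1) := mul_nonneg hα.le (by linarith)
    nlinarith [sq_nonneg α]
  induction K with
  | zero => simp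
  | succ K ih =>
    obtain ⟨hlt, hδK⟩ := hK (K + 1) le_rfl
    have hstep := hardy_shiftedJacobi hα hβ hlt N
    rw [show α - (K + 1 : ℕ) + 1 = α - K by push_cast; ring] at hstep
    set m := betaInt α (β + 1) (shiftedJacobi α β N ^ 2)
    set mK := betaInt (α - K) (β + 1) (shiftedJacobi α β N ^ 2)
    set mK' := betaInt (α - (K + 1 : ℕ)) (β + 1) (shiftedJacobi α β N ^ 2)
    have hmK₀ : 0 ≤ mK := betaInt_sq_nonneg _
    have hmK₀' : 0 ≤ mK' := betaInt_sq_nonneg _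
    have hδΛ : δ * mK' ≤ Λ * mK := by
      refine (mul_le_mul_of_nonneg_right hδK hmK₀').trans (hstep.trans ?_)
      refine mul_le_mul_of_nonneg_right ?_ hmK₀
      linarith [sq_nonneg ((K + 1 : ℕ) : ℝ)]
    calc mK' ≤ Λ * mK / δ := (le_div_iff₀' hδ).2 hδΛ
      _ ≤ Λ * ((Λ / δ) ^ K * m) / δ := by
        gcongr
        exact ih fun j hj => hK j (Nat.le_succ_of_le hj)
      _ = (Λ / δ) ^ (K + 1) * m := by ring

lemma rpow_neg_le_mul_one_add {u t b K : ℝ} (hu : 0 < u) (ht : 0 < t) (hb : 0 ≤ b) (hbK : b ≤ K) :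
    u ^ (-b) ≤ t ^ b * (1 + t ^ (-K) * u ^ (-K)) := by
  have htu : 0 < t * u := mul_pos ht hu
  have hsplit : u ^ (-b) = t ^ b * (t * u) ^ (-b) := by
    rw [mul_rpow ht.le hu.le, ← mul_assoc, ← rpow_add ht, add_neg_cancel, rpow_zero, one_mul]
  rw [hsplit, ← mul_rpow ht.le hu.le]
  refine mul_le_mul_of_nonneg_left ?_ (rpow_nonneg ht.le b)
  rcases le_total 1 (t * u) with h | h
  · linarith [rpow_le_one_of_one_le_of_nonpos h (neg_nonpos.2 hb), rpow_nonneg htu.le (-K)]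
  · linarith [rpow_le_rpow_of_exponent_ge htu h (neg_le_neg hbK)]

lemma betaInt_sub_le_of_betaInt_sub_le {a b c K t G : ℝ} {p : ℝ[X]} (hc : 0 < c) (hK : K < a)
    (hb : 0 ≤ b) (hbK : b ≤ K) (ht : 0 < t) (hp : ∀ u ∈ Ioo (0 : ℝ) 1, 0 ≤ p.eval u)
    (hG : betaInt (a - K) c p ≤ G * t ^ K * betaInt a c p) :
    betaInt (a - b) c p ≤ (1 + G) * t ^ b * betaInt a c p := by
  have hint {e : ℝ} (he : e ≤ K) :=
    integrableOn_eval_mul_betaWeight (show 0 < a - e by linarith) hc p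
  have hint₀ : IntegrableOn (fun u => p.eval u * betaWeight a c u) (Ioo 0 1) := by
    simpa using hint (hb.trans hbK)
  have hle : betaInt (a - b) c p ≤
      t ^ b * (betaInt a c p + t ^ (-K) * betaInt (a - K) c p) := by
    simp only [betaInt]
    rw [← integral_const_mul, ← integral_add hint₀ ((hint le_rfl).const_mul _),
      ← integral_const_mul]
    refine setIntegral_mono_on (hint hbK)
      ((hint₀.add ((hint le_rfl).const_mul _)).const_mul _) measurableSet_Ioo fun u hu => ?_
    rw [sub_eq_add_neg, sub_eq_add_neg, ← rpow_mul_betaWeight _ hu.1, ← rpow_mul_betaWeight _ hu.1]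
    have hpw : 0 ≤ p.eval u * betaWeight a c u := mul_nonneg (hp u hu) (betaWeight_pos hu).le
    calc p.eval u * (u ^ (-b) * betaWeight a c u)
        = u ^ (-b) * (p.eval u * betaWeight a c u) := by ring
      _ ≤ t ^ b * (1 + t ^ (-K) * u ^ (-K)) * (p.eval u * betaWeight a c u) :=
        mul_le_mul_of_nonneg_right (rpow_neg_le_mul_one_add hu.1 ht hb hbK) hpw
      _ = _ := by ring
  calc betaInt (a - b) c p
      ≤ t ^ b * (betaInt a c p + t ^ (-K) * (G * t ^ K * betaInt a c p)) := by
        refine hle.trans ?_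
        gcongr
    _ = t ^ b * (betaInt a c p + t ^ (-K + K) * G * betaInt a c p) := by rw [rpow_add ht]; ring
    _ = (1 + G) * t ^ b * betaInt a c p := by rw [neg_add_cancel, rpow_zero]; ring

-- The Hardy inequality is iterated `⌈r⌉` times with the constants `4 (d n)²` and `d² / 48`, whose
-- quotient is `192 n²`.
lemma exists_betaInt_shiftedJacobi_sq_sub_le {r : ℝ} (hr : 0 ≤ r) :
    ∃ G : ℝ, 0 < G ∧ ∀ (d n : ℕ) (b : ℝ), 3 ≤ d → d ≤ n → r + 1 ≤ n → 0 ≤ b → b ≤ r →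
      betaInt (d / 2 + r - b) (d / 2 - 2 + 1) (shiftedJacobi (d / 2 + r) (d / 2 - 2) (d * n) ^ 2) ≤
        G * (n : ℝ) ^ (2 * b) * betaInt (d / 2 + r) (d / 2 - 2 + 1)
          (shiftedJacobi (d / 2 + r) (d / 2 - 2) (d * n) ^ 2) := by
  have hrK := Nat.le_ceil r
  have hKr := Nat.ceil_lt_add_one hr
  set K := ⌈r⌉₊
  refine ⟨1 + 192 ^ K, by positivity, fun d n b hd hdn hn hb hbr => ?_⟩
  have hd' : (3 : ℝ) ≤ d := by exact_mod_cast hd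
  have hdn' : (d : ℝ) ≤ n := by exact_mod_cast hdn
  have hn₀ : (0 : ℝ) < n := by linarith
  have hN : 3 * (n : ℝ) ≤ d * n := by gcongr
  rw [rpow_mul hn₀.le, rpow_ofNat]
  refine betaInt_sub_le_of_betaInt_sub_le (by linarith) (by linarith) hb (hbr.trans hrK)
    (by positivity) (fun u _ => by simpa only [eval_pow] using sq_nonneg _) ?_
  refine (betaInt_shiftedJacobi_sq_sub_natCast_le (Λ := 4 * ((d : ℝ) * n) ^ 2)
    (δ := (d : ℝ) ^ 2 / 48) (by linarith) (by linarith) (d * n) K ?_ (by positivity)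
    fun j hj => ?_).trans_eq ?_
  · rw [Nat.cast_mul]
    set N := (d : ℝ) * n
    have hsum : N * (N + (d / 2 + r) + (d / 2 - 2) + 1) ≤ N * (3 * N) := by
      gcongr
      linarith
    have hsq : (d / 2 + r) ^ 2 ≤ N ^ 2 := by gcongr; linarith
    have hmul : (d / 2 + r) * (d / 2 - 2 + 1) ≤ N * N := by gcongr <;> linarith
    linarith [sq_nonneg N]
  · have hjK : (j : ℝ) ≤ K := by exact_mod_cast hj
    have hmul : (d : ℝ) / 6 * (d / 2) ≤ (d / 2 + r - j) * (d / 2 + r + j) := by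
      gcongr <;> linarith [j.cast_nonneg (α := ℝ)]
    constructor <;> linarith
  · rw [show 4 * ((d : ℝ) * n) ^ 2 / (d ^ 2 / 48) = 192 * (n : ℝ) ^ 2 by field_simp; norm_num,
      mul_pow, rpow_natCast]

end HardyInequality

section SphereMoments

open Polynomial

/-- The moment `∫ t^m exp(-t²) dt` of the (unnormalized) Gaussian weight. -/
def gaussianMoment (m : ℕ) : ℝ := ∫ t : ℝ, t ^ m * exp (-t ^ 2)

lemma integrable_pow_mul_exp_neg_sq (m : ℕ) : Integrable fun t : ℝ => t ^ m * exp (-t ^ 2) := by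
  simpa using integrable_rpow_mul_exp_neg_mul_sq one_pos
    (show (-1 : ℝ) < m by linarith [m.cast_nonneg (α := ℝ)])

lemma gaussianMoment_succ (m : ℕ) : gaussianMoment (m + 1) = m / 2 * gaussianMoment (m - 1) := by
  have hderiv (t : ℝ) : HasDerivAt (fun t : ℝ => t ^ m * exp (-t ^ 2))
      (m * (t ^ (m - 1) * exp (-t ^ 2)) - 2 * (t ^ (m + 1) * exp (-t ^ 2))) t :=
    ((hasDerivAt_pow m t).mul (hasDerivAt_pow 2 t).neg.exp).congr_deriv <| by
      simp only [Pi.neg_apply, Nat.cast_ofNat]; ring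
  have hint (k : ℕ) (a : ℝ) := (integrable_pow_mul_exp_neg_sq k).const_mul a
  have h := integral_eq_zero_of_hasDerivAt_of_integrable hderiv
    ((hint _ _).sub (hint _ _)) (integrable_pow_mul_exp_neg_sq m)
  rw [integral_sub (hint _ _) (hint _ _), integral_const_mul, integral_const_mul] at h
  unfold gaussianMoment
  linarith

lemma integral_Ioi_pow_mul_exp_neg_sq (k : ℕ) :
    ∫ t in Ioi (0 : ℝ), t ^ k * exp (-t ^ 2) = Gamma ((k + 1) / 2) / 2 := by
  have h := integral_rpow_mul_exp_neg_rpow (p := 2) (q := k) two_pos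
    (by linarith [k.cast_nonneg (α := ℝ)])
  simp only [rpow_natCast, rpow_two] at h
  rw [h]
  ring

variable {E : Type*} [NormedAddCommGroup E] [InnerProductSpace ℝ E] [FiniteDimensional ℝ E]
  [MeasurableSpace E] [BorelSpace E] {d : ℕ}

lemma integral_inner_pow_mul_exp_neg_norm_sq (hE : Module.finrank ℝ E = d + 1) {x : E}
    (hx : ‖x‖ = 1) (m : ℕ) :
    ∫ y : E, ⟪x, y⟫ ^ m * exp (-‖y‖ ^ 2) = gaussianMoment m * gaussianMoment 0 ^ d := by
  obtain ⟨b, hb⟩ := Orthonormal.exists_orthonormalBasis_extension_of_card_eq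
    (𝕜 := ℝ) (ι := Fin (d + 1)) (by simpa using hE) (v := fun _ => x) (s := {0})
    ⟨fun _ => hx, fun i j hij => absurd (Subsingleton.elim i j) hij⟩
  let F (i : Fin (d + 1)) (t : ℝ) : ℝ := t ^ (if i = 0 then m else 0) * exp (-t ^ 2)
  have hF (y : E) : ⟪x, y⟫ ^ m * exp (-‖y‖ ^ 2) = ∏ i, F i (b.repr y i) := by
    have hx_coord : ∏ i, b.repr y i ^ (if i = 0 then m else 0) = ⟪x, y⟫ ^ m := by
      rw [Finset.prod_eq_single 0 (by simp +contextual) (by simp), if_pos rfl, b.repr_apply_apply,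
        hb 0 rfl]
    rw [← b.repr.norm_map y, EuclideanSpace.norm_sq_eq, ← Finset.sum_neg_distrib, Real.exp_sum,
      Finset.prod_mul_distrib, hx_coord]
    simp only [Real.norm_eq_abs, sq_abs]
  have hpres := (EuclideanSpace.volume_preserving_symm_measurableEquiv_toLp (Fin (d + 1))).comp
    b.measurePreserving_repr
  calc ∫ y : E, ⟪x, y⟫ ^ m * exp (-‖y‖ ^ 2)
      = ∫ z : Fin (d + 1) → ℝ, ∏ i, F i (z i) := by
        simp only [hF]
        exact hpres.integral_comp ((MeasurableEquiv.measurableEmbedding _).comp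
          b.repr.toHomeomorph.measurableEmbedding) fun z => ∏ i, F i (z i)
    _ = gaussianMoment m * gaussianMoment 0 ^ d := by
        rw [integral_fintype_prod_volume_eq_prod, Fin.prod_univ_succ]
        simp [F, gaussianMoment]

lemma integral_volumeIoiPow (k : ℕ) (f : ℝ → ℝ) :
    ∫ t : Ioi (0 : ℝ), f t ∂.volumeIoiPow k = ∫ t in Ioi (0 : ℝ), t ^ k * f t := by
  simp only [Measure.volumeIoiPow, ENNReal.ofReal]
  rw [integral_withDensity_eq_integral_smul (measurable_subtype_coe.pow_const _).real_toNNReal,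
    integral_subtype_comap measurableSet_Ioi fun t : ℝ => Real.toNNReal (t ^ k) • f t]
  refine setIntegral_congr_fun measurableSet_Ioi fun t ht => ?_
  simp only [NNReal.smul_def, Real.coe_toNNReal _ (pow_nonneg (le_of_lt ht) _), smul_eq_mul]

lemma integral_inner_pow_mul_norm (hE : Module.finrank ℝ E = d + 1) (μ : Measure E)
    [μ.IsAddHaarMeasure] (x : E) (m : ℕ) (f : ℝ → ℝ) :
    ∫ y : E, ⟪x, y⟫ ^ m * f ‖y‖ ∂μ =
      (∫ w : Metric.sphere (0 : E) 1, ⟪x, w⟫ ^ m ∂μ.toSphere) *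
        ∫ t in Ioi (0 : ℝ), t ^ (d + m) * f t := by
  have : Nontrivial E := Module.nontrivial_of_finrank_pos (R := ℝ) (by omega)
  calc ∫ y : E, ⟪x, y⟫ ^ m * f ‖y‖ ∂μ
      = ∫ y : ({0}ᶜ : Set E), ⟪x, (y : E)⟫ ^ m * f ‖(y : E)‖ ∂μ.comap (↑) := by
        rw [integral_subtype_comap (measurableSet_singleton _).compl
          fun y : E => ⟪x, y⟫ ^ m * f ‖y‖, restrict_compl_singleton]
    _ = ∫ p, ⟪x, (p.1 : E)⟫ ^ m * ((p.2 : ℝ) ^ m * f p.2) ∂μ.toSphere.prod (.volumeIoiPow d) := by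
        rw [← Nat.add_sub_cancel d 1, ← hE,
          ← μ.measurePreserving_homeomorphUnitSphereProd.integral_comp
            (Homeomorph.measurableEmbedding _)]
        refine integral_congr_ae (Filter.Eventually.of_forall fun y => ?_)
        have hy : ‖(y : E)‖ ≠ 0 := norm_ne_zero_iff.2 y.2
        simp only [homeomorphUnitSphereProd_apply_fst_coe, homeomorphUnitSphereProd_apply_snd_coe,
          inner_smul_right, mul_pow, inv_pow]
        field_simp
    _ = (∫ w : Metric.sphere (0 : E) 1, ⟪x, w⟫ ^ m ∂μ.toSphere) *
          ∫ t : Ioi (0 : ℝ), (t : ℝ) ^ m * f t ∂.volumeIoiPow d :=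
        integral_prod_mul (fun w : Metric.sphere (0 : E) 1 => ⟪x, (w : E)⟫ ^ m)
          fun t : Ioi (0 : ℝ) => (t : ℝ) ^ m * f t
    _ = _ := by
        rw [integral_volumeIoiPow d fun t => t ^ m * f t]
        simp only [pow_add, mul_assoc]

lemma integral_inner_pow_toSphere (hE : Module.finrank ℝ E = d + 1) {x : E} (hx : ‖x‖ = 1)
    (m : ℕ) :
    (∫ w : Metric.sphere (0 : E) 1, ⟪x, w⟫ ^ m ∂(volume : Measure E).toSphere) *
      (Gamma ((d + m + 1) / 2) / 2) = gaussianMoment m * gaussianMoment 0 ^ d := by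
  have h := integral_inner_pow_mul_norm hE volume x m fun t => exp (-t ^ 2)
  rw [integral_inner_pow_mul_exp_neg_norm_sq hE hx, integral_Ioi_pow_mul_exp_neg_sq] at h
  rw [h, Nat.cast_add]

end SphereMoments

section ZonalPolynomials

open Polynomial

variable {d : ℕ}

instance isProbabilityMeasure_sphMeasure (d : ℕ) : IsProbabilityMeasure (sphMeasure d) := by
  constructor
  rw [sphMeasure, Measure.smul_apply, smul_eq_mul, ENNReal.inv_mul_cancel]
  · exact Measure.measure_univ_ne_zero.2 (Measure.toSphere_ne_zero _)
  · exact measure_ne_top _ _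

lemma continuous_ip (x : Sph d) : Continuous (ip x) := by
  unfold ip
  fun_prop

lemma one_sub_ip_div_two_mem_Icc (x y : Sph d) : (1 - ip x y) / 2 ∈ Icc (0 : ℝ) 1 := by
  have h : |ip x y| ≤ 1 := by
    simpa [ip] using abs_real_inner_le_norm (x : EuclideanSpace ℝ (Fin (d + 1))) y
  rw [abs_le] at h
  constructor <;> linarith

lemma integral_ip_pow_succ (hd : 1 ≤ d) (x : Sph d) (m : ℕ) :
    (d + m) * ∫ y, ip x y ^ (m + 1) ∂sphMeasure d = m * ∫ y, ip x y ^ (m - 1) ∂sphMeasure d := by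
  set V := (volume : Measure (EuclideanSpace ℝ (Fin (d + 1)))).toSphere
  have hmoment (k : ℕ) : (∫ y, ip x y ^ k ∂V) * (Gamma ((d + k + 1) / 2) / 2) =
      gaussianMoment k * gaussianMoment 0 ^ d :=
    integral_inner_pow_toSphere (by simp) (norm_eq_of_mem_sphere x) k
  have hΓ (k : ℕ) : Gamma ((d + k + 1) / 2) ≠ 0 := (Gamma_pos_of_pos (by positivity)).ne'
  simp only [sphMeasure, integral_smul_measure, smul_eq_mul]
  suffices h : (d + m) * ∫ y, ip x y ^ (m + 1) ∂V = m * ∫ y, ip x y ^ (m - 1) ∂V by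
    linear_combination ((V univ)⁻¹).toReal * h
  have hsucc := hmoment (m + 1)
  rw [gaussianMoment_succ] at hsucc
  rcases m with _ | m
  · have hmean := (mul_eq_zero.1 (hsucc.trans (by simp))).resolve_right
      (div_ne_zero (hΓ _) two_ne_zero)
    rw [hmean, mul_zero, Nat.cast_zero, zero_mul]
  have hΓsucc : Gamma ((d + (m + 1 + 1 : ℕ) + 1) / 2) =
      (d + m + 1) / 2 * Gamma (((d : ℝ) + m + 1) / 2) := by
    rw [← Gamma_add_one (by positivity)]
    congr 1
    push_cast
    ring
  rw [hΓsucc, mul_assoc, Nat.add_sub_cancel, ← hmoment m] at hsucc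
  refine mul_right_cancel₀ (hΓ m) ?_
  push_cast at hsucc ⊢
  linear_combination 4 * hsucc

lemma betaInt_one_sub_two_X_pow_succ {a : ℝ} (ha : 0 < a) (m : ℕ) :
    (2 * a + m) * betaInt a a ((1 - 2 * X) ^ (m + 1)) =
      m * betaInt a a ((1 - 2 * X) ^ (m - 1)) := by
  have h := betaInt_integration_by_parts ha ha ((1 - 2 * X) ^ m)
  have hq : C a * (1 - X) * (1 - 2 * X) ^ m - C a * X * (1 - 2 * X) ^ m +
      X * (1 - X) * derivative ((1 - 2 * X) ^ m) =
      C (a + m / 2) * (1 - 2 * X) ^ (m + 1) - C (m / 2 : ℝ) * (1 - 2 * X) ^ (m - 1) := by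
    refine Polynomial.funext fun u => ?_
    have hm : (m : ℝ) * (1 - 2 * u) ^ (m - 1) * (1 - 2 * u) = m * (1 - 2 * u) ^ m := by
      rcases m with _ | m
      · simp
      · rw [Nat.add_sub_cancel, mul_assoc, pow_succ]
    simp only [derivative_pow, derivative_sub, derivative_one, derivative_mul, derivative_ofNat,
      derivative_X, eval_add, eval_sub, eval_mul, eval_C, eval_X, eval_one, eval_pow, eval_ofNat,
      eval_zero]
    linear_combination (1 - 2 * u) / 2 * hm
  rw [hq, betaInt_sub ha ha, betaInt_C_mul, betaInt_C_mul] at h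
  linear_combination 2 * h

lemma integral_ip_pow (hd : 1 ≤ d) (x : Sph d) (m : ℕ) :
    ∫ y, ip x y ^ m ∂sphMeasure d =
      betaInt (d / 2) (d / 2) ((1 - 2 * X) ^ m) / betaInt (d / 2) (d / 2) 1 := by
  have ha : (0 : ℝ) < d / 2 := by positivity
  have hI := (betaInt_one_pos ha ha).ne'
  induction m using Nat.twoStepInduction with
  | zero => simp [hI]
  | one =>
    have h₁ := integral_ip_pow_succ hd x 0
    have h₂ := betaInt_one_sub_two_X_pow_succ ha 0
    have hd0 : d ≠ 0 := by omega
    simp_all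
  | more m hm _ =>
    have h₁ := integral_ip_pow_succ hd x (m + 1)
    have h₂ := betaInt_one_sub_two_X_pow_succ ha (m + 1)
    have hdm : (d + (m + 1 : ℕ) : ℝ) ≠ 0 := by positivity
    rw [mul_div_cancel₀ _ two_ne_zero] at h₂
    refine mul_left_cancel₀ hdm ?_
    rw [h₁, mul_div_assoc', h₂, Nat.add_sub_cancel, hm, mul_div_assoc']

lemma integral_eval_one_sub_ip_div_two (hd : 1 ≤ d) (x : Sph d) (p : ℝ[X]) :
    ∫ y, p.eval ((1 - ip x y) / 2) ∂sphMeasure d =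
      betaInt (d / 2) (d / 2) p / betaInt (d / 2) (d / 2) 1 := by
  have ha : (0 : ℝ) < d / 2 := by positivity
  have hcomp (q : ℝ[X]) : ∫ y, q.eval (ip x y) ∂sphMeasure d =
      betaInt (d / 2) (d / 2) (q.comp (1 - 2 * X)) / betaInt (d / 2) (d / 2) 1 := by
    induction q using Polynomial.induction_on' with
    | add p q hp hq =>
      have hint (q : ℝ[X]) : Integrable (fun y => q.eval (ip x y)) (sphMeasure d) :=
        (q.continuous.comp (continuous_ip x)).integrable_of_hasCompactSupport
          (.of_compactSpace _)
      simp only [eval_add, add_comp]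
      rw [integral_add (hint p) (hint q), betaInt_add ha ha, hp, hq, add_div]
    | monomial m a =>
      simp only [eval_monomial, monomial_comp]
      rw [integral_const_mul, betaInt_C_mul, integral_ip_pow hd, mul_div_assoc]
  have hp : (p.comp (C (1 / 2) * (1 - X))).comp (1 - 2 * X) = p := by
    have : C (1 / 2) * 2 = (1 : ℝ[X]) := by rw [← C_ofNat, ← C_mul]; simp
    rw [comp_assoc, mul_comp, sub_comp, C_comp, X_comp, one_comp, sub_sub_cancel, ← mul_assoc, this,
      one_mul, comp_X]
  convert hcomp (p.comp (C (1 / 2) * (1 - X))) using 3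
  · simp only [eval_comp, eval_mul, eval_C, eval_sub, eval_one, eval_X]
    ring_nf
  · exact hp.symm

lemma omegaS_div_omegaS_sub_one (hd : 1 ≤ d) :
    omegaS d / omegaS (d - 1) = 2 ^ ((d : ℝ) - 1) * betaInt (d / 2) (d / 2) 1 := by
  have ha : (0 : ℝ) < d / 2 := by positivity
  have hΓ := Gamma_mul_Gamma_add_half ((d : ℝ) / 2)
  rw [← add_div, mul_div_cancel₀ _ two_ne_zero] at hΓ
  have hπ : π ^ (((d : ℝ) + 1) / 2) = π ^ ((d : ℝ) / 2) * √π := by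
    rw [sqrt_eq_rpow, ← rpow_add pi_pos, add_div]
  have h2 : (2 : ℝ) ^ ((d : ℝ) - 1) * 2 ^ (1 - (d : ℝ)) = 1 := by
    rw [← rpow_add two_pos, sub_add_sub_cancel', sub_self, rpow_zero]
  have := Gamma_pos_of_pos ha
  have := Gamma_pos_of_pos (show (0 : ℝ) < d by positivity)
  have := Gamma_pos_of_pos (show (0 : ℝ) < (d + 1) / 2 by positivity)
  rw [betaInt_one ha ha, add_halves, omegaS, omegaS, Nat.cast_sub hd, Nat.cast_one, sub_add_cancel,
    hπ]
  field_simp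
  linear_combination (-(2 : ℝ) ^ ((d : ℝ) - 1)) * hΓ - Gamma d * √π * h2

lemma isSphPoly_eval_one_sub_ip_div_two (x : Sph d) {p : ℝ[X]} {M : ℕ} (hp : p.natDegree < M) :
    IsSphPoly d M fun y => p.eval ((1 - ip x y) / 2) := by
  let q : MvPolynomial (Fin (d + 1)) ℝ := MvPolynomial.C (1 / 2) *
    (1 - ∑ i, MvPolynomial.C ((x : EuclideanSpace ℝ (Fin (d + 1))) i) * MvPolynomial.X i)
  have hq : q.totalDegree ≤ 1 := by
    refine (MvPolynomial.totalDegree_mul _ _).trans ?_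
    rw [MvPolynomial.totalDegree_C, zero_add]
    refine (MvPolynomial.totalDegree_sub _ _).trans (max_le (by simp) ?_)
    refine MvPolynomial.totalDegree_finsetSum_le fun i _ => ?_
    exact (MvPolynomial.totalDegree_mul _ _).trans (by simp)
  have hq_eval (y : Sph d) :
      MvPolynomial.eval (fun i => (y : EuclideanSpace ℝ (Fin (d + 1))) i) q = (1 - ip x y) / 2 := by
    simp only [q, ip, PiLp.inner_apply, map_mul, map_sub, map_sum, MvPolynomial.eval_C,
      MvPolynomial.eval_X, map_one, RCLike.inner_apply, conj_trivial, mul_comm]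
    ring
  refine ⟨aeval q p, ?_, fun y => ?_⟩
  · rw [Nat.cast_lt, aeval_eq_sum_range]
    refine (MvPolynomial.totalDegree_finsetSum_le fun j hj => ?_).trans_lt hp
    calc (p.coeff j • q ^ j).totalDegree ≤ j * q.totalDegree :=
          (MvPolynomial.totalDegree_smul_le _ _).trans (MvPolynomial.totalDegree_pow _ _)
      _ ≤ j * 1 := Nat.mul_le_mul_left _ hq
      _ ≤ p.natDegree := by rw [mul_one]; exact Finset.mem_range_succ_iff.1 hj
  · simp only
    rw [← hq_eval, ← MvPolynomial.coe_aeval_eq_eval, RingHom.coe_coe, ← aeval_algHom_apply,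
      coe_aeval_eq_eval]

lemma IsMZ.integral_eval_sq_le (hd : 1 ≤ d) {M : ℕ} {ν : SignedMeasure (Sph d)} {c : ℝ}
    (hν : IsMZ d (2 * M : ℕ) ν c) (x : Sph d) {p : ℝ[X]} (hp : p.natDegree < M) :
    ∫ y, p.eval ((1 - ip x y) / 2) ^ 2 ∂ν.totalVariation ≤
      c * (betaInt (d / 2) (d / 2) (p ^ 2) / betaInt (d / 2) (d / 2) 1) := by
  have hM : ((2 * M : ℕ) : ℝ) / 2 = M := by simp
  refine (hν _ (hM ▸ isSphPoly_eval_one_sub_ip_div_two x hp)).trans_eq ?_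
  simp only [← eval_pow]
  rw [integral_eval_one_sub_ip_div_two hd]

end ZonalPolynomials

section CauchySchwarz

lemma integral_abs_mul_abs_le_sqrt {X : Type*} [TopologicalSpace X] [CompactSpace X]
    [MeasurableSpace X] [BorelSpace X] [SecondCountableTopology X] (μ : Measure X)
    [IsFiniteMeasure μ] {f g : X → ℝ} (hf : Continuous f) (hg : Continuous g) :
    ∫ y, |f y| * |g y| ∂μ ≤ √((∫ y, f y ^ 2 ∂μ) * ∫ y, g y ^ 2 ∂μ) := by
  have hL2 {f : X → ℝ} (hf : Continuous f) : MemLp (fun y => |f y|) (ENNReal.ofReal 2) μ :=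
    hf.abs.memLp_of_hasCompactSupport (.of_compactSpace _)
  have h := integral_mul_le_Lp_mul_Lq_of_nonneg HolderConjugate.two_two
    (Filter.Eventually.of_forall fun _ => abs_nonneg _)
    (Filter.Eventually.of_forall fun _ => abs_nonneg _) (hL2 hf) (hL2 hg)
  simpa only [rpow_two, sq_abs, ← sqrt_eq_rpow,
    ← sqrt_mul (integral_nonneg fun y => sq_nonneg (f y))] using h

end CauchySchwarz

section ReproducingKernel

open Polynomial

variable {α β : ℝ}

lemma betaInt_shiftedJacobi_mul_shiftedJacobi (hα : -1 < α) (hβ : -1 < β) (hs : 0 < α + β + 1)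
    {l k : ℕ} (h : l ≠ k) :
    betaInt (α + 1) (β + 1) (shiftedJacobi α β l * shiftedJacobi α β k) = 0 := by
  wlog hlk : l < k generalizing l k
  · rw [mul_comm]
    exact this h.symm (h.lt_or_gt.resolve_left hlk)
  have hdeg := natDegree_shiftedJacobi_le (α := α) (β := β) l
  rw [betaInt_mul_shiftedJacobi hα hβ hs (hdeg.trans hlk.le),
    coeff_eq_zero_of_natDegree_lt (hdeg.trans_lt hlk), zero_mul]

lemma jacobiScale_sq_mul_betaInt (hα : -1 < α) (hβ : -1 < β) (hs : 0 < α + β + 1) (l : ℕ) :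
    2 ^ (α + β + 1) * (jacobiScale α β l ^ 2 * betaInt (α + 1) (β + 1) (shiftedJacobi α β l ^ 2))
      = 1 := by
  have : (0 : ℝ) ≤ l := l.cast_nonneg
  have : 0 < α + β + 2 * l + 1 := by linarith
  have := Gamma_pos_of_pos (show 0 < α + l + 1 by linarith)
  have := Gamma_pos_of_pos (show 0 < β + l + 1 by linarith)
  have := Gamma_pos_of_pos (show 0 < α + β + l + 1 by linarith)
  rw [betaInt_shiftedJacobi_sq hα hβ hs, jacobiScale,
    show (l : ℝ) + α + β + 1 = α + β + l + 1 by ring, show (l : ℝ) + α + 1 = α + l + 1 by ring,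
    show (l : ℝ) + β + 1 = β + l + 1 by ring,
    show 2 * (l : ℝ) + α + β + 1 = α + β + 2 * l + 1 by ring, mul_pow, sq_sqrt (by positivity)]
  field_simp

lemma jacobiScale_ne_zero (hα : -1 < α) (hβ : -1 < β) (hs : 0 < α + β + 1) (l : ℕ) :
    jacobiScale α β l ≠ 0 := by
  intro h
  simpa [h] using jacobiScale_sq_mul_betaInt hα hβ hs l

lemma jacobiP_one_sq (hα : -1 < α) (hβ : -1 < β) (hs : 0 < α + β + 1) (l : ℕ) :
    2 ^ (α + β + 1) * jacobiP α β l 1 ^ 2 =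
      (α + β + 2 * l + 1) * Gamma (α + l + 1) * Gamma (α + β + l + 1) /
        (Gamma (β + l + 1) * l.factorial * Gamma (α + 1) ^ 2) := by
  have : (0 : ℝ) ≤ l := l.cast_nonneg
  have : 0 < α + β + 2 * l + 1 := by linarith
  have := Gamma_pos_of_pos (show 0 < α + l + 1 by linarith)
  have := Gamma_pos_of_pos (show 0 < β + l + 1 by linarith)
  have := Gamma_pos_of_pos (show 0 < α + β + l + 1 by linarith)
  have := Gamma_pos_of_pos (show 0 < α + 1 by linarith)
  have h := jacobiScale_sq_mul_betaInt hα hβ hs l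
  rw [betaInt_shiftedJacobi_sq hα hβ hs] at h
  rw [jacobiP_eq_eval, sub_self, zero_div, eval_shiftedJacobi_zero]
  rw [mul_comm 2 (l : ℝ)] at *
  field_simp at h ⊢
  linear_combination h

/-- The kernel `jacobiK α β M` as a polynomial in `u = (1 - x) / 2`. -/
def jacobiKernelPoly (α β : ℝ) (M : ℕ) : ℝ[X] :=
  ∑ l ∈ Finset.range M, C (jacobiP α β l 1 * jacobiScale α β l) * shiftedJacobi α β l

lemma jacobiK_eq_eval (M : ℕ) (x : ℝ) :
    jacobiK α β M x = (jacobiKernelPoly α β M).eval ((1 - x) / 2) := by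
  simp only [jacobiK, jacobiKernelPoly, eval_finsetSum, eval_C_mul, jacobiP_eq_eval _ x, mul_assoc]

lemma natDegree_jacobiKernelPoly_lt {M : ℕ} (hM : 0 < M) :
    (jacobiKernelPoly α β M).natDegree < M := by
  refine Nat.lt_of_le_pred hM (natDegree_sum_le_of_forall_le _ _ fun l hl => ?_)
  exact (natDegree_C_mul_le _ _).trans ((natDegree_shiftedJacobi_le l).trans
    (Nat.le_pred_of_lt (Finset.mem_range.1 hl)))

lemma betaInt_jacobiKernelPoly_sq (hα : -1 < α) (hβ : -1 < β) (hs : 0 < α + β + 1) (M : ℕ) :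
    2 ^ (α + β + 1) * betaInt (α + 1) (β + 1) (jacobiKernelPoly α β M ^ 2) = jacobiK α β M 1 := by
  have hα' : 0 < α + 1 := by linarith
  have hβ' : 0 < β + 1 := by linarith
  rw [sq, jacobiKernelPoly, Finset.sum_mul_sum, betaInt_sum hα' hβ', Finset.mul_sum, jacobiK]
  refine Finset.sum_congr rfl fun l hl => ?_
  rw [betaInt_sum hα' hβ', Finset.sum_eq_single_of_mem l hl]
  · rw [mul_mul_mul_comm, ← C_mul, betaInt_C_mul, ← sq (shiftedJacobi α β l)]
    linear_combination jacobiP α β l 1 ^ 2 * jacobiScale_sq_mul_betaInt hα hβ hs l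
  · intro k _ hkl
    rw [mul_mul_mul_comm, ← C_mul, betaInt_C_mul,
      betaInt_shiftedJacobi_mul_shiftedJacobi hα hβ hs hkl.symm, mul_zero]

lemma sphK_eq_eval (d M : ℕ) (x : ℝ) :
    sphK d M x = (C (omegaS d / omegaS (d - 1)) *
      jacobiKernelPoly ((d : ℝ) / 2 - 1) ((d : ℝ) / 2 - 1) M).eval ((1 - x) / 2) := by
  rw [sphK, jacobiK_eq_eval, eval_C_mul]

lemma continuous_sphK (d M : ℕ) : Continuous (sphK d M) := by
  rw [funext (sphK_eq_eval d M)]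
  fun_prop

lemma IsMZ.integral_sphK_sq_le {d M : ℕ} (hd : 2 ≤ d) (hM : 0 < M) {ν : SignedMeasure (Sph d)}
    {c : ℝ} (hν : IsMZ d (2 * M : ℕ) ν c) (x : Sph d) :
    ∫ y, sphK d M (ip x y) ^ 2 ∂ν.totalVariation ≤ c * sphK d M 1 := by
  have hd' : (2 : ℝ) ≤ d := by exact_mod_cast hd
  have hI := betaInt_one_pos (a := d / 2) (b := d / 2) (by positivity) (by positivity)
  have hK := betaInt_jacobiKernelPoly_sq (α := d / 2 - 1) (β := d / 2 - 1) (by linarith)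
    (by linarith) (by linarith) M
  rw [sub_add_cancel, show (d : ℝ) / 2 - 1 + (d / 2 - 1) + 1 = d - 1 by ring] at hK
  simp only [sphK_eq_eval d M (ip x _)]
  refine (hν.integral_eval_sq_le (by omega) x
    ((natDegree_C_mul_le _ _).trans_lt (natDegree_jacobiKernelPoly_lt hM))).trans_eq ?_
  rw [mul_pow, ← C_pow, betaInt_C_mul, sphK, ← hK, omegaS_div_omegaS_sub_one (by omega)]
  field_simp

-- Up to the factor `2`, the right-hand side is the dimension of the polynomials of degree `l`.
lemma omegaS_div_mul_jacobiP_one_sq_le {d : ℕ} (hd : 2 ≤ d) (l : ℕ) :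
    omegaS d / omegaS (d - 1) * jacobiP (d / 2 - 1) (d / 2 - 1) l 1 ^ 2 ≤
      2 * ((l + (d - 1)).choose (d - 1) : ℝ) := by
  have hd' : (2 : ℝ) ≤ d := by exact_mod_cast hd
  have ha : (0 : ℝ) < d / 2 := by positivity
  have : (0 : ℝ) ≤ l := l.cast_nonneg
  have := Gamma_pos_of_pos ha
  have := Gamma_pos_of_pos (show (0 : ℝ) < d / 2 + l by positivity)
  have h := jacobiP_one_sq (α := d / 2 - 1) (β := d / 2 - 1) (by linarith) (by linarith)
    (by linarith) l
  have hΓd : Gamma d = (d - 1).factorial := by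
    rw [← Gamma_nat_eq_factorial, Nat.cast_sub (by omega), Nat.cast_one, sub_add_cancel]
  have hΓl : (l + d - 1) * Gamma (l + d - 1) = (l + (d - 1)).factorial := by
    rw [← Gamma_add_one (by linarith), ← Gamma_nat_eq_factorial, Nat.cast_add,
      Nat.cast_sub (by omega), Nat.cast_one, add_sub_assoc]
  rw [sub_add_cancel, show (d : ℝ) / 2 - 1 + (d / 2 - 1) + 1 = d - 1 by ring,
    show (d : ℝ) / 2 - 1 + (d / 2 - 1) + l + 1 = l + d - 1 by ring,
    show (d : ℝ) / 2 - 1 + (d / 2 - 1) + 2 * l + 1 = 2 * l + d - 1 by ring,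
    show (d : ℝ) / 2 - 1 + l + 1 = d / 2 + l by ring] at h
  rw [omegaS_div_omegaS_sub_one (by omega), mul_right_comm, h, betaInt_one ha ha, add_halves, hΓd,
    add_comm l, Nat.cast_add_choose, add_comm _ l, ← hΓl]
  calc _ = (2 * l + d - 1) * (Gamma (l + d - 1) / (l.factorial * (d - 1).factorial)) := by
        field_simp
    _ ≤ (2 * (l + d - 1)) * (Gamma (l + d - 1) / (l.factorial * (d - 1).factorial)) := by
        have := Gamma_pos_of_pos (show (0 : ℝ) < l + d - 1 by linarith)
        gcongr
        linarith
    _ = _ := by ring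

lemma sphK_one_le {d : ℕ} (hd : 2 ≤ d) (M : ℕ) :
    sphK d M 1 ≤ 2 * ((M + d) ^ d / d.factorial : ℝ) := by
  calc sphK d M 1
      ≤ ∑ l ∈ Finset.range (M + 1), 2 * ((l + (d - 1)).choose (d - 1) : ℝ) := by
        rw [sphK, jacobiK, Finset.mul_sum]
        refine (Finset.sum_le_sum fun l _ => ?_).trans (Finset.sum_le_sum_of_subset_of_nonneg
          (Finset.range_mono M.le_succ) fun _ _ _ => by positivity)
        rw [← sq]
        exact omegaS_div_mul_jacobiP_one_sq_le hd l
    _ = 2 * ((M + d).choose d : ℝ) := by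
        rw [← Finset.mul_sum, ← Nat.cast_sum, Nat.sum_range_add_choose]
        congr 3 <;> omega
    _ ≤ 2 * ((M + d) ^ d / d.factorial : ℝ) := by
        have h := Nat.choose_le_pow_div (α := ℝ) d (M + d)
        push_cast at h
        gcongr

end ReproducingKernel

section LogisticMajorant

open Polynomial

variable {s u : ℝ}

/-- The sum `∑_{j < J} 4 ^ (-j s) (gʲ u) ^ p + 4 ^ (-J s) ((gᴶ u) ^ p + 1)` over the iterates of the
logistic map `g u = 4 u (1 - u)`. Since `g u ≈ 4 u` near `0`, this polynomial of degree `2 ^ J p` is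
comparable with `u ^ s + 4 ^ (-J s)` on `[0, 1]`. -/
def logisticSum (s : ℝ) (p : ℕ) : ℕ → ℝ → ℝ
  | 0, u => u ^ p + 1
  | J + 1, u => u ^ p + 4 ^ (-s) * logisticSum s p J (4 * u * (1 - u))

lemma exists_logisticSum_eq_sum_sq (s : ℝ) (L J : ℕ) :
    ∃ (m : ℕ) (f : Fin m → ℝ[X]), (∀ i, (f i).natDegree ≤ 2 ^ J * L) ∧
      ∀ u, logisticSum s (2 * L) J u = ∑ i, (f i).eval u ^ 2 := by
  induction J with
  | zero =>
    refine ⟨2, ![X ^ L, 1], fun i => ?_, fun u => ?_⟩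
    · fin_cases i <;> simp
    · simp [logisticSum, ← pow_mul, mul_comm L]
  | succ J ih =>
    obtain ⟨m, f, hdeg, hf⟩ := ih
    refine ⟨m + 1, Fin.cons (X ^ L) fun i => C (2 ^ (-s)) * (f i).comp (4 * X * (1 - X)),
      fun i => ?_, fun u => ?_⟩
    · refine Fin.cases ?_ (fun i => ?_) i
      · simpa using Nat.le_mul_of_pos_left L (Nat.two_pow_pos (J + 1))
      have hlog : (4 * X * (1 - X) : ℝ[X]).natDegree ≤ 2 := by compute_degree
      rw [Fin.cons_succ]
      calc _ ≤ (f i).natDegree * (4 * X * (1 - X) : ℝ[X]).natDegree :=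
            (natDegree_C_mul_le _ _).trans natDegree_comp_le
        _ ≤ 2 ^ J * L * 2 := Nat.mul_le_mul (hdeg i) hlog
        _ = 2 ^ (J + 1) * L := by ring
    · have h4 : (4 : ℝ) ^ (-s) = (2 ^ (-s)) ^ 2 := by
        rw [← rpow_mul_natCast zero_le_two, mul_comm, Nat.cast_ofNat, rpow_mul zero_le_two]
        norm_num
      simp [logisticSum, hf, Fin.sum_univ_succ, Finset.mul_sum, h4, mul_pow, ← pow_mul, mul_comm L]

lemma logistic_mem_Icc (hu : u ∈ Icc (0 : ℝ) 1) : 4 * u * (1 - u) ∈ Icc (0 : ℝ) 1 :=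
  ⟨mul_nonneg (mul_nonneg zero_le_four hu.1) (sub_nonneg.2 hu.2),
    by linarith [sq_nonneg (2 * u - 1)]⟩

lemma logisticSum_nonneg (s : ℝ) (p J : ℕ) (hu : u ∈ Icc (0 : ℝ) 1) : 0 ≤ logisticSum s p J u := by
  have hp : 0 ≤ u ^ p := pow_nonneg hu.1 p
  induction J generalizing u with
  | zero => exact add_nonneg hp zero_le_one
  | succ J ih =>
    have hg := logistic_mem_Icc hu
    exact add_nonneg hp (mul_nonneg (by positivity) (ih hg (pow_nonneg hg.1 p)))

lemma four_rpow_neg_mul_logistic_rpow (s : ℝ) (hu : u ∈ Icc (0 : ℝ) 1) :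
    4 ^ (-s) * (4 * u * (1 - u)) ^ s = u ^ s * (1 - u) ^ s := by
  have := hu.1
  rw [mul_rpow (by positivity) (sub_nonneg.2 hu.2), mul_rpow zero_le_four hu.1, ← mul_assoc,
    ← mul_assoc, ← rpow_add four_pos, neg_add_cancel, rpow_zero, one_mul]

lemma pow_le_rpow_of_mem_Icc {p : ℕ} (hs : 0 < s) (hp : s ≤ p) (hu : u ∈ Icc (0 : ℝ) 1) :
    u ^ p ≤ u ^ s := by
  rw [← rpow_natCast]
  exact rpow_le_rpow_of_exponent_ge_of_imp hu.1 hu.2 hp fun _ h => absurd h (hs.trans_le hp).ne'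

lemma logistic_step_of_le_half {p : ℕ} {A D : ℝ} (hs : 0 ≤ s) (hA : 0 ≤ A) (hD : 0 ≤ D)
    (hAD : D * (4 ^ (-s) * 2 ^ p - 1) = 1) (hu : 0 ≤ u) (hu' : u ≤ 1 / 2) :
    u ^ p + A * (u ^ s * (1 - u) ^ s) ≤
      A * u ^ s - D * u ^ p + 4 ^ (-s) * (D * (4 * u * (1 - u)) ^ p) := by
  have hpow : 2 ^ p * u ^ p ≤ (4 * u * (1 - u)) ^ p := by
    rw [← mul_pow]
    refine pow_le_pow_left₀ (by positivity) ?_ p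
    nlinarith
  have hone : (1 - u) ^ s ≤ 1 := rpow_le_one (by linarith) (by linarith) hs
  calc u ^ p + A * (u ^ s * (1 - u) ^ s)
      ≤ u ^ p + A * (u ^ s * 1) := by gcongr
    _ = A * u ^ s - D * u ^ p + 4 ^ (-s) * (D * (2 ^ p * u ^ p)) := by
        linear_combination -u ^ p * hAD
    _ ≤ _ := by gcongr

lemma logistic_step_of_half_le {p : ℕ} {A D : ℝ} (hs : 0 < s) (hp : s ≤ p) (hA : 0 ≤ A)
    (hD : 0 ≤ D) (hAD : A * (1 - 2 ^ (-s)) = 1 + D) (hu : 1 / 2 ≤ u) (hu' : u ≤ 1) :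
    u ^ p + A * (u ^ s * (1 - u) ^ s) ≤
      A * u ^ s - D * u ^ p + 4 ^ (-s) * (D * (4 * u * (1 - u)) ^ p) := by
  have hu0 : 0 ≤ u := by linarith
  have hhalf : (1 - u) ^ s ≤ 2 ^ (-s) := by
    rw [rpow_neg zero_le_two, ← inv_rpow zero_le_two]
    exact rpow_le_rpow (by linarith) (by linarith) hs.le
  have hpow := mul_le_mul_of_nonneg_left (pow_le_rpow_of_mem_Icc hs hp ⟨hu0, hu'⟩)
    (show 0 ≤ 1 + D by positivity)
  have : 0 ≤ (4 * u * (1 - u)) ^ p := pow_nonneg (logistic_mem_Icc ⟨hu0, hu'⟩).1 p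
  calc u ^ p + A * (u ^ s * (1 - u) ^ s)
      ≤ u ^ p + A * (u ^ s * 2 ^ (-s)) := by gcongr
    _ ≤ A * u ^ s - D * u ^ p := by linear_combination hpow - u ^ s * hAD
    _ ≤ _ := le_add_of_nonneg_right (by positivity)

-- For `u ≤ 1 / 2` the logistic map amplifies the correction `D * u ^ p` by more than `4 ^ s`,
-- which absorbs the new summand `u ^ p`; for `u ≥ 1 / 2` the factor `(1 - u) ^ s` does.
lemma logisticSum_le_sub {p : ℕ} {A D : ℝ} (hs : 0 < s) (hp : s ≤ p) (hA : 0 ≤ A) (hD : 0 ≤ D)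
    (hD' : D * (4 ^ (-s) * 2 ^ p - 1) = 1) (hA' : A * (1 - 2 ^ (-s)) = 1 + D) (J : ℕ)
    (hu : u ∈ Icc (0 : ℝ) 1) :
    logisticSum s p J u ≤ 4 ^ (-(J * s)) + A * u ^ s - D * u ^ p := by
  have hAD : 1 + D ≤ A := hA'.symm.trans_le (mul_le_of_le_one_right hA (by
    linarith [rpow_pos_of_pos two_pos (-s)]))
  induction J generalizing u with
  | zero =>
    have hpow := pow_le_rpow_of_mem_Icc hs hp hu
    have := rpow_nonneg hu.1 s
    have := mul_le_mul hAD hpow (pow_nonneg hu.1 p) hA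
    simp only [logisticSum, Nat.cast_zero, zero_mul, neg_zero, rpow_zero]
    linarith
  | succ J ih =>
    have hstep : u ^ p + A * (u ^ s * (1 - u) ^ s) ≤
        A * u ^ s - D * u ^ p + 4 ^ (-s) * (D * (4 * u * (1 - u)) ^ p) := by
      rcases le_total u (1 / 2) with h | h
      · exact logistic_step_of_le_half hs.le hA hD hD' hu.1 h
      · exact logistic_step_of_half_le hs hp hA hD hA' h hu.2
    have hexp : (4 : ℝ) ^ (-((J + 1 : ℕ) * s)) = 4 ^ (-s) * 4 ^ (-(J * s)) := by
      rw [← rpow_add four_pos]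
      push_cast
      ring_nf
    have := mul_le_mul_of_nonneg_left (ih (logistic_mem_Icc hu))
      (rpow_nonneg zero_le_four (-s))
    rw [logisticSum, hexp]
    linear_combination this + hstep + A * four_rpow_neg_mul_logistic_rpow s hu

lemma exists_logisticSum_le {p : ℕ} (hs : 0 < s) (hp : 2 * s < p) :
    ∃ A > 0, ∀ J : ℕ, ∀ u ∈ Icc (0 : ℝ) 1, logisticSum s p J u ≤ 4 ^ (-(J * s)) + A * u ^ s := by
  have h2 : (2 : ℝ) ^ (-s) < 1 := rpow_lt_one_of_one_lt_of_neg one_lt_two (by linarith)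
  have h4 : (1 : ℝ) < 4 ^ (-s) * 2 ^ p := by
    rw [show (4 : ℝ) = 2 ^ (2 : ℝ) by norm_num, ← rpow_mul zero_le_two, ← rpow_natCast,
      ← rpow_add two_pos]
    exact one_lt_rpow one_lt_two (by linarith)
  set D : ℝ := 1 / (4 ^ (-s) * 2 ^ p - 1)
  set A : ℝ := (1 + D) / (1 - 2 ^ (-s))
  have hD : 0 < D := one_div_pos.2 (sub_pos.2 h4)
  have hD' : D * (4 ^ (-s) * 2 ^ p - 1) = 1 := one_div_mul_cancel (sub_pos.2 h4).ne'
  have hA : 0 < A := div_pos (by linarith) (sub_pos.2 h2)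
  have hA' : A * (1 - 2 ^ (-s)) = 1 + D := div_mul_cancel₀ _ (sub_pos.2 h2).ne'
  refine ⟨A, hA, fun J u hu =>
    (logisticSum_le_sub hs (by linarith) hA.le hD.le hD' hA' J hu).trans (sub_le_self _ ?_)⟩
  exact mul_nonneg hD.le (pow_nonneg hu.1 p)

lemma rpow_mul_one_add_le {k : ℕ} (hs : 0 ≤ s) (hu : u ∈ Icc (0 : ℝ) 1) :
    u ^ s * (1 + 2 * k * u) ≤ 1 + 2 * k := by
  have h0 := hu.1
  calc u ^ s * (1 + 2 * k * u) ≤ 1 * (1 + 2 * k * 1) := by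
        gcongr
        · exact rpow_le_one hu.1 hu.2 hs
        · exact hu.2
    _ = 1 + 2 * k := by ring

lemma one_add_le_logistic_step {k : ℕ} (hk : s ≤ k) (hu : 0 ≤ u) (hku : 4 * k * u ≤ 1)
    (hu' : 4 * u ≤ 1) :
    1 + 2 * k * u ≤ (1 - u) ^ s * (1 + 2 * k * (4 * u * (1 - u))) := by
  have hbern : 1 - k * u ≤ (1 - u) ^ s := by
    calc 1 - k * u = 1 + (k : ℝ) * (-u) := by ring
      _ ≤ (1 + -u) ^ k := one_add_mul_le_pow (by linarith) k
      _ = (1 - u) ^ (k : ℝ) := by rw [rpow_natCast, sub_eq_add_neg]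
      _ ≤ (1 - u) ^ s := rpow_le_rpow_of_exponent_ge (by linarith) (by linarith) hk
  have hku0 : 0 ≤ (k : ℝ) * u := by positivity
  have hlog : 2 * u ≤ 4 * u * (1 - u) := by nlinarith
  calc 1 + 2 * k * u ≤ (1 - k * u) * (1 + 2 * k * (2 * u)) := by nlinarith
    _ ≤ (1 - u) ^ s * (1 + 2 * k * (4 * u * (1 - u))) := by
        gcongr
        linarith

-- The growth of `1 + 2 * k * u` under the logistic map compensates the loss `(1 - u) ^ s`.
lemma rpow_mul_one_add_le_logisticSum {k : ℕ} (hs : 0 ≤ s) (hk : s ≤ k) (hk1 : (1 : ℝ) ≤ k)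
    (p J : ℕ) (hu : u ∈ Icc (0 : ℝ) 1) :
    u ^ s * (1 + 2 * k * u) ≤ (1 + 2 * k) * (4 * k) ^ p * logisticSum s p J u := by
  induction J generalizing u with
  | zero =>
    refine (rpow_mul_one_add_le hs hu).trans ?_
    rw [mul_assoc]
    refine le_mul_of_one_le_right (by positivity) (one_le_mul_of_one_le_of_one_le
      (one_le_pow₀ (by linarith)) (le_add_of_nonneg_left (pow_nonneg hu.1 p)))
  | succ J ih =>
    have hg := logistic_mem_Icc hu
    have hsum := logisticSum_nonneg s p J hg
    have hus := rpow_nonneg hu.1 s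
    have hup := pow_nonneg hu.1 p
    rcases le_total (4 * k * u) 1 with hku | hku
    · calc u ^ s * (1 + 2 * k * u)
          ≤ u ^ s * ((1 - u) ^ s * (1 + 2 * k * (4 * u * (1 - u)))) := by
            gcongr
            exact one_add_le_logistic_step hk hu.1 hku
              (le_trans (by nlinarith [hu.1]) hku)
        _ = 4 ^ (-s) * ((4 * u * (1 - u)) ^ s * (1 + 2 * k * (4 * u * (1 - u)))) := by
            rw [← mul_assoc, ← mul_assoc (4 ^ (-s)), four_rpow_neg_mul_logistic_rpow s hu]
        _ ≤ 4 ^ (-s) * ((1 + 2 * k) * (4 * k) ^ p * logisticSum s p J (4 * u * (1 - u))) := by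
            exact mul_le_mul_of_nonneg_left (ih hg) (by positivity)
        _ = (1 + 2 * k) * (4 * k) ^ p * (4 ^ (-s) * logisticSum s p J (4 * u * (1 - u))) := by
            ring
        _ ≤ _ := by
            rw [logisticSum]
            gcongr
            exact le_add_of_nonneg_left hup
    · calc u ^ s * (1 + 2 * k * u)
          ≤ (1 + 2 * k) * (4 * k * u) ^ p :=
            (rpow_mul_one_add_le hs hu).trans
              (le_mul_of_one_le_right (by positivity) (one_le_pow₀ hku))
        _ = (1 + 2 * k) * (4 * k) ^ p * u ^ p := by rw [mul_pow, mul_assoc]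
        _ ≤ _ := by
            rw [logisticSum]
            gcongr
            exact le_add_of_nonneg_right (by positivity)

lemma exists_rpow_le_logisticSum (hs : 0 ≤ s) (p : ℕ) :
    ∃ E > 0, ∀ J : ℕ, ∀ u ∈ Icc (0 : ℝ) 1, u ^ s ≤ E * logisticSum s p J u := by
  obtain ⟨k, hk⟩ := exists_nat_ge (s + 1)
  have hk1 : (1 : ℝ) ≤ k := by linarith
  refine ⟨(1 + 2 * k) * (4 * k) ^ p, by positivity, fun J u hu => le_trans ?_
    (rpow_mul_one_add_le_logisticSum hs (by linarith) hk1 p J hu)⟩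
  have := hu.1
  exact le_mul_of_one_le_right (rpow_nonneg hu.1 s) (le_add_of_nonneg_right (by positivity))

lemma exists_two_pow_mul_le_and_four_rpow_le (hs : 0 ≤ s) {L n : ℕ} (hL : 0 < L) (hLn : L ≤ n) :
    ∃ J : ℕ, 2 ^ J * L ≤ n ∧ (4 : ℝ) ^ (-(J * s)) ≤ (2 * L) ^ (2 * s) * n ^ (-(2 * s)) := by
  have hq : n / L ≠ 0 := (Nat.div_pos hLn hL).ne'
  have hn : (0 : ℝ) < n := by exact_mod_cast hL.trans_le hLn
  refine ⟨Nat.log 2 (n / L), (Nat.mul_le_mul_right L (Nat.pow_log_le_self 2 hq)).trans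
    (Nat.div_mul_le_self n L), ?_⟩
  set J := Nat.log 2 (n / L)
  have hlt : n < 2 ^ (J + 1) * L :=
    (Nat.div_lt_iff_lt_mul hL).1 (Nat.lt_pow_succ_log_self one_lt_two _)
  have hle : (n : ℝ) ≤ 2 ^ J * (2 * L) := by
    rw [← mul_assoc, ← pow_succ]
    exact_mod_cast hlt.le
  have h4 : (4 : ℝ) ^ (-(J * s)) = (2 ^ J) ^ (-(2 * s)) := by
    rw [show (4 : ℝ) = 2 ^ (2 : ℝ) by norm_num, ← rpow_natCast, ← rpow_mul zero_le_two,
      ← rpow_mul zero_le_two]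
    ring_nf
  rw [h4, rpow_neg (by positivity), rpow_neg hn.le, ← div_eq_mul_inv, inv_eq_one_div,
    div_le_div_iff₀ (by positivity) (by positivity), one_mul,
    ← mul_rpow (by positivity) (by positivity)]
  exact rpow_le_rpow hn.le (hle.trans_eq (mul_comm _ _)) (by positivity)

lemma exists_sum_sq_majorant_rpow (hs : 0 ≤ s) :
    ∃ C > 0, ∀ n : ℕ, s + 1 ≤ n → ∃ (m : ℕ) (f : Fin m → ℝ[X]), (∀ i, (f i).natDegree < 2 * n) ∧
      ∀ u ∈ Icc (0 : ℝ) 1, u ^ s ≤ ∑ i, (f i).eval u ^ 2 ∧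
        ∑ i, (f i).eval u ^ 2 ≤ C * (u ^ s + (n : ℝ) ^ (-(2 * s))) := by
  rcases hs.eq_or_lt with rfl | hs
  · refine ⟨1, one_pos, fun n hn => ⟨1, fun _ => 1, fun _ => ?_, fun u _ => by simp⟩⟩
    have : (0 : ℝ) < n := by linarith
    simpa using (by exact_mod_cast this : 0 < n)
  set L := ⌊s⌋₊ + 1 with hLdef
  have hsL : s < L := by exact_mod_cast Nat.lt_floor_add_one s
  have hLs : (L : ℝ) ≤ s + 1 := by
    rw [hLdef, Nat.cast_add_one]
    linarith [Nat.floor_le hs.le]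
  have hL : 0 < L := Nat.succ_pos _
  obtain ⟨A, hA, hupper⟩ := exists_logisticSum_le (p := 2 * L) hs (by push_cast; linarith)
  obtain ⟨E, hE, hlower⟩ := exists_rpow_le_logisticSum hs.le (2 * L)
  refine ⟨E * (A + (2 * L) ^ (2 * s)), by positivity, fun n hn => ?_⟩
  have hLn : L ≤ n := by exact_mod_cast hLs.trans hn
  obtain ⟨J, hJ, h4J⟩ := exists_two_pow_mul_le_and_four_rpow_le hs.le hL hLn
  obtain ⟨m, f, hdeg, hf⟩ := exists_logisticSum_eq_sum_sq s L J
  refine ⟨m, fun i => C √E * f i, fun i => ?_, fun u hu => ?_⟩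
  · exact ((natDegree_C_mul_le √E (f i)).trans ((hdeg i).trans hJ)).trans_lt (by omega)
  · have hsum : ∑ i, (C √E * f i).eval u ^ 2 = E * logisticSum s (2 * L) J u := by
      simp only [hf, Finset.mul_sum, eval_C_mul, mul_pow, sq_sqrt hE.le]
    have hus := rpow_nonneg hu.1 s
    have : 0 ≤ (n : ℝ) ^ (-(2 * s)) := by positivity
    refine ⟨hsum ▸ hlower J u hu, ?_⟩
    rw [hsum, mul_assoc]
    gcongr
    refine (hupper J u hu).trans ?_
    have : 0 ≤ A * (n : ℝ) ^ (-(2 * s)) := by positivity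
    have : 0 ≤ (2 * (L : ℝ)) ^ (2 * s) * u ^ s := by positivity
    linarith

end LogisticMajorant

section GammaRatios

lemma Gamma_add_rpow_le {x s t : ℝ} (hx : 0 < x) (hs : 0 < s) (ht : 0 < t) :
    Gamma (x + s) ^ (s + t) ≤ Gamma x ^ t * Gamma (x + s + t) ^ s := by
  have hst : 0 < s + t := add_pos hs ht
  have hΓ := (Gamma_pos_of_pos hx).le
  have hΓs := (Gamma_pos_of_pos (add_pos hx hs)).le
  have hΓst := (Gamma_pos_of_pos (add_pos (add_pos hx hs) ht)).le
  have h := Gamma_mul_add_mul_le_rpow_Gamma_mul_rpow_Gamma hx (add_pos (add_pos hx hs) ht)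
    (div_pos ht hst) (div_pos hs hst) (by field_simp; ring)
  rw [show t / (s + t) * x + s / (s + t) * (x + s + t) = x + s by field_simp; ring] at h
  refine (rpow_le_rpow hΓs h hst.le).trans_eq ?_
  rw [mul_rpow (by positivity) (by positivity), ← rpow_mul hΓ, ← rpow_mul hΓst,
    div_mul_cancel₀ _ hst.ne', div_mul_cancel₀ _ hst.ne']

lemma rpow_mul_Gamma_le_Gamma_add {x a : ℝ} (hx : 0 < x) (ha : 1 < a) :
    x ^ a * Gamma x ≤ Gamma (x + a) := by
  have hΓ := Gamma_pos_of_pos hx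
  have h := Gamma_add_rpow_le hx one_pos (sub_pos.2 ha)
  rw [add_add_sub_cancel, add_sub_cancel, rpow_one, Gamma_add_one hx.ne', mul_rpow hx.le hΓ.le,
    rpow_sub_one hΓ.ne', div_mul_eq_mul_div, le_div_iff₀ hΓ, mul_assoc, mul_left_comm] at h
  exact le_of_mul_le_mul_left h (by positivity)

lemma Gamma_add_le_rpow_mul_Gamma {x r : ℝ} (hx : 0 < x) (hr : 0 ≤ r) :
    Gamma (x + r) ≤ (x + r) ^ r * Gamma x := by
  rcases hr.eq_or_lt with rfl | hr
  · simp
  have hxr : 0 < x + r := add_pos hx hr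
  have hΓ := Gamma_pos_of_pos hxr
  have h := Gamma_add_rpow_le hx hr one_pos
  rw [rpow_one, Gamma_add_one hxr.ne', mul_rpow hxr.le hΓ.le, rpow_add_one hΓ.ne',
    ← mul_assoc, mul_comm (_ * _)] at h
  exact (le_of_mul_le_mul_left h (by positivity)).trans_eq (mul_comm _ _)

lemma betaInt_inv_shiftedJacobi_sq_div_le {α β : ℝ} (hα : 1 < α) (hβ : -1 < β) {N : ℕ}
    (hN : 0 < N) :
    betaInt α (β + 1) (shiftedJacobi α β N ^ 2) / (shiftedJacobi α β N).eval 0 ^ 2 ≤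
      α * Gamma α ^ 2 / (N : ℝ) ^ (2 * α) := by
  have hα0 : 0 < α := by linarith
  have hN' : (1 : ℝ) ≤ N := by exact_mod_cast hN
  have := Gamma_pos_of_pos hα0
  have := Gamma_pos_of_pos (show 0 < α + N + 1 by linarith)
  have := Gamma_pos_of_pos (show 0 < β + N + 1 by linarith)
  have := Gamma_pos_of_pos (show 0 < α + β + N + 1 by linarith)
  have hratio {x : ℝ} (hx : N ≤ x) : Gamma x / Gamma (x + α) ≤ 1 / (N : ℝ) ^ α := by
    have hx0 : 0 < x := by linarith
    have := Gamma_pos_of_pos hx0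
    rw [div_le_div_iff₀ (Gamma_pos_of_pos (by linarith)) (by positivity), one_mul, mul_comm]
    refine le_trans ?_ (rpow_mul_Gamma_le_Gamma_add hx0 hα)
    gcongr
  have hβN := hratio (show (N : ℝ) ≤ β + N + 1 by linarith)
  have hNN := hratio (show (N : ℝ) ≤ N + 1 by linarith)
  rw [show β + N + 1 + α = α + β + N + 1 by ring] at hβN
  rw [show (N : ℝ) + 1 + α = α + N + 1 by ring, Gamma_nat_eq_factorial] at hNN
  rw [betaInt_inv_shiftedJacobi_sq hα0 hβ, eval_shiftedJacobi_zero, Gamma_add_one hα0.ne']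
  calc _ = Gamma (β + N + 1) / Gamma (α + β + N + 1) * (N.factorial / Gamma (α + N + 1)) *
        (α * Gamma α ^ 2) := by field_simp
    _ ≤ 1 / (N : ℝ) ^ α * (1 / (N : ℝ) ^ α) * (α * Gamma α ^ 2) := by gcongr
    _ = α * Gamma α ^ 2 / (N : ℝ) ^ (2 * α) := by
        rw [two_mul, rpow_add (by linarith)]
        field_simp

lemma mul_Gamma_half_add_sq_le {d : ℕ} (hd : 1 ≤ d) {r : ℝ} (hr : 0 ≤ r) :
    (d / 2 + r) * Gamma (d / 2 + r) ^ 2 ≤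
      betaInt (d / 2) (d / 2) 1 * ((1 + r) ^ (1 + 2 * r) * d.factorial * (d : ℝ) ^ (2 * r)) := by
  have hd' : (1 : ℝ) ≤ d := by exact_mod_cast hd
  have hd2 : (0 : ℝ) < d / 2 := by positivity
  have hα : 0 < (d : ℝ) / 2 + r := by positivity
  have hαd : (d : ℝ) / 2 + r ≤ (1 + r) * d := by nlinarith
  have hfact : d * Gamma d = d.factorial := by
    rw [← Gamma_add_one (by positivity), Gamma_nat_eq_factorial]
  have := Gamma_pos_of_pos hd2
  have := Gamma_pos_of_pos hα
  have := Gamma_pos_of_pos (show (0 : ℝ) < d by linarith)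
  calc (d / 2 + r) * Gamma (d / 2 + r) ^ 2
      ≤ (d / 2 + r) * ((d / 2 + r) ^ r * Gamma (d / 2)) ^ 2 := by
        gcongr
        exact Gamma_add_le_rpow_mul_Gamma hd2 hr
    _ = (d / 2 + r) ^ (1 + 2 * r) * Gamma (d / 2) ^ 2 := by
        rw [rpow_add hα, rpow_one, mul_comm 2 r, rpow_mul hα.le, rpow_two]
        ring
    _ ≤ ((1 + r) * d) ^ (1 + 2 * r) * Gamma (d / 2) ^ 2 := by gcongr
    _ = _ := by
        rw [mul_rpow (by positivity) (by positivity), rpow_add (by positivity : (0 : ℝ) < d),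
          rpow_one, betaInt_one hd2 hd2, add_halves, ← hfact]
        field_simp

lemma add_two_mul_add_pow_le {d n : ℕ} (hdn : d ≤ n) :
    (((d + 2) * n : ℕ) + d : ℝ) ^ d ≤ exp 3 * ((d * n : ℕ) : ℝ) ^ d := by
  rcases d.eq_zero_or_pos with rfl | hd
  · simp
  have hd' : (0 : ℝ) < d := by exact_mod_cast hd
  have hdn' : (d : ℝ) ≤ n := by exact_mod_cast hdn
  have hexp := one_sub_div_pow_le_exp_neg (n := d) (t := -3) (by linarith)
  rw [neg_neg] at hexp
  calc (((d + 2) * n : ℕ) + d : ℝ) ^ d ≤ ((1 - -3 / d) * (d * n : ℕ)) ^ d := by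
        gcongr
        push_cast
        field_simp
        nlinarith
    _ ≤ exp 3 * ((d * n : ℕ) : ℝ) ^ d := by
        rw [mul_pow]
        gcongr

lemma sphK_one_mul_betaInt_shiftedJacobi_sq_le {d n : ℕ} {r : ℝ} (hr : 0 ≤ r) (hd : 3 ≤ d)
    (hdn : d ≤ n) :
    sphK d ((d + 2) * n) 1 * (betaInt (d / 2 + r) (d / 2 - 2 + 1)
        (shiftedJacobi (d / 2 + r) (d / 2 - 2) (d * n) ^ 2) /
          (betaInt (d / 2) (d / 2) 1 * (shiftedJacobi (d / 2 + r) (d / 2 - 2) (d * n)).eval 0 ^ 2))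
      ≤ 2 * exp 3 * (1 + r) ^ (1 + 2 * r) * (n : ℝ) ^ (-(2 * r)) := by
  have hd' : (3 : ℝ) ≤ d := by exact_mod_cast hd
  have hn : 0 < n := by omega
  have hn' : (0 : ℝ) < n := by exact_mod_cast hn
  have hI := betaInt_one_pos (a := d / 2) (b := d / 2) (by positivity) (by positivity)
  have hratio := (betaInt_inv_shiftedJacobi_sq_div_le (α := d / 2 + r) (β := d / 2 - 2)
    (N := d * n) (by linarith) (by linarith)
      (Nat.mul_pos (show 0 < d by omega) hn)).trans
      (div_le_div_of_nonneg_right (mul_Gamma_half_add_sq_le (by omega) hr) (by positivity))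
  have hK : sphK d ((d + 2) * n) 1 ≤ 2 * (exp 3 * ((d * n : ℕ) : ℝ) ^ d / d.factorial) :=
    (sphK_one_le (by omega) _).trans (by gcongr; exact add_two_mul_add_pow_le hdn)
  have hpow : ((d * n : ℕ) : ℝ) ^ (2 * ((d : ℝ) / 2 + r)) =
      ((d * n : ℕ) : ℝ) ^ d * ((d : ℝ) ^ (2 * r) * (n : ℝ) ^ (2 * r)) := by
    rw [mul_add, mul_div_cancel₀ _ two_ne_zero, rpow_add (by positivity), rpow_natCast,
      Nat.cast_mul, mul_rpow (by positivity) hn'.le]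
  rw [hpow] at hratio
  rw [mul_comm (betaInt _ _ 1), ← div_div]
  refine (mul_le_mul hK (div_le_div_of_nonneg_right hratio hI.le)
    (div_nonneg (div_nonneg (betaInt_sq_nonneg _) (sq_nonneg _)) hI.le)
    (by positivity)).trans_eq ?_
  rw [rpow_neg hn'.le]
  field_simp

end GammaRatios

section LebesgueConstant

open Polynomial

variable {d : ℕ} {ν : SignedMeasure (Sph d)} {c : ℝ}

lemma IsMZ.nonneg {n : ℝ} (hn : 0 < n) (hν : IsMZ d n ν c) : 0 ≤ c := by
  have h := hν (fun _ => 1) ⟨1, by simpa using hn, by simp⟩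
  simp only [one_pow, integral_const, probReal_univ, smul_eq_mul, mul_one] at h
  exact measureReal_nonneg.trans h

lemma isFiniteMeasure_totalVariation {X : Type*} [MeasurableSpace X] (ν : SignedMeasure X) :
    IsFiniteMeasure ν.totalVariation := by
  unfold SignedMeasure.totalVariation
  infer_instance

lemma continuous_eval_mul_rpow (p : ℝ[X]) {s : ℝ} (hs : 0 ≤ s) (x : Sph d) :
    Continuous fun y => p.eval ((1 - ip x y) / 2) * (1 - ip x y) ^ s := by
  have := continuous_rpow_const hs
  have := p.continuous
  have := continuous_ip x
  fun_prop

lemma eval_mul_two_mul_rpow_sq_le {u s : ℝ} (hu : 0 ≤ u) (p : ℝ[X]) {ι : Type*} [Fintype ι]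
    {f : ι → ℝ[X]} (hf : u ^ s ≤ ∑ i, (f i).eval u ^ 2) :
    (p.eval u * (2 * u) ^ (s / 2)) ^ 2 ≤ 2 ^ s * ∑ i, (p * f i).eval u ^ 2 := by
  have hu2 : 0 ≤ 2 * u := by positivity
  calc (p.eval u * (2 * u) ^ (s / 2)) ^ 2 = 2 ^ s * (p.eval u ^ 2 * u ^ s) := by
        rw [mul_pow, ← rpow_mul_natCast hu2, Nat.cast_ofNat, div_mul_cancel₀ _ two_ne_zero,
          mul_rpow zero_le_two hu]
        ring
    _ ≤ 2 ^ s * (p.eval u ^ 2 * ∑ i, (f i).eval u ^ 2) := by gcongr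
    _ = 2 ^ s * ∑ i, (p * f i).eval u ^ 2 := by simp only [eval_mul, mul_pow, Finset.mul_sum]

lemma IsMZ.integral_eval_mul_rpow_sq_le (hd : 1 ≤ d) {M : ℕ} (hν : IsMZ d (2 * M : ℕ) ν c)
    (x : Sph d) {s : ℝ} (hs : 0 ≤ s) {p : ℝ[X]} {ι : Type*} [Fintype ι] {f : ι → ℝ[X]}
    (hdeg : ∀ i, (p * f i).natDegree < M)
    (hf : ∀ u ∈ Icc (0 : ℝ) 1, u ^ s ≤ ∑ i, (f i).eval u ^ 2) :
    ∫ y, (p.eval ((1 - ip x y) / 2) * (1 - ip x y) ^ (s / 2)) ^ 2 ∂ν.totalVariation ≤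
      c * (2 ^ s / betaInt (d / 2) (d / 2) 1 * ∑ i, betaInt (d / 2) (d / 2) ((p * f i) ^ 2)) := by
  have := isFiniteMeasure_totalVariation ν
  have hint {g : Sph d → ℝ} (hg : Continuous g) : Integrable g ν.totalVariation :=
    hg.integrable_of_hasCompactSupport (.of_compactSpace _)
  have hcont (i : ι) : Continuous fun y => (p * f i).eval ((1 - ip x y) / 2) ^ 2 := by
    have := (p * f i).continuous
    have := continuous_ip x
    fun_prop
  have hpoint (y : Sph d) : (p.eval ((1 - ip x y) / 2) * (1 - ip x y) ^ (s / 2)) ^ 2 ≤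
      2 ^ s * ∑ i, (p * f i).eval ((1 - ip x y) / 2) ^ 2 := by
    have hu := one_sub_ip_div_two_mem_Icc x y
    have h := eval_mul_two_mul_rpow_sq_le hu.1 p (hf _ hu)
    rwa [mul_div_cancel₀ _ two_ne_zero] at h
  calc _ ≤ ∫ y, 2 ^ s * ∑ i, (p * f i).eval ((1 - ip x y) / 2) ^ 2 ∂ν.totalVariation :=
        integral_mono (hint ((continuous_eval_mul_rpow p (by positivity) x).pow 2))
          (hint (continuous_const.mul (continuous_finsetSum _ fun i _ => hcont i))) hpoint
    _ = 2 ^ s * ∑ i, ∫ y, (p * f i).eval ((1 - ip x y) / 2) ^ 2 ∂ν.totalVariation := by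
        rw [integral_const_mul, integral_finsetSum _ fun i _ => hint (hcont i)]
    _ ≤ 2 ^ s * ∑ i, c * (betaInt (d / 2) (d / 2) ((p * f i) ^ 2) /
          betaInt (d / 2) (d / 2) 1) := by
        gcongr with i
        exact hν.integral_eval_sq_le hd x (hdeg i)
    _ = _ := by
        rw [← Finset.mul_sum, ← Finset.sum_div]
        ring

lemma sum_betaInt_mul_sq_le {a b b' s t C : ℝ} (ha : 0 < a) (hb : 0 < b) (hbb' : b ≤ b')
    (hs : 0 ≤ s) (p : ℝ[X]) {ι : Type*} [Fintype ι] {f : ι → ℝ[X]}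
    (hf : ∀ u ∈ Ioo (0 : ℝ) 1, ∑ i, (f i).eval u ^ 2 ≤ C * (u ^ s + t)) :
    ∑ i, betaInt a b' ((p * f i) ^ 2) ≤
      C * (betaInt (a + s) b (p ^ 2) + t * betaInt a b (p ^ 2)) := by
  have hb' : 0 < b' := hb.trans_le hbb'
  have hp := integrableOn_eval_mul_betaWeight ha hb (p ^ 2)
  have hps := integrableOn_eval_mul_betaWeight (add_pos_of_pos_of_nonneg ha hs) hb (p ^ 2)
  rw [← betaInt_sum ha hb', betaInt, betaInt, betaInt, ← integral_const_mul, ← integral_add hps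
    (hp.const_mul t), ← integral_const_mul]
  refine setIntegral_mono_on (integrableOn_eval_mul_betaWeight ha hb' _)
    ((hps.add (hp.const_mul t)).const_mul C) measurableSet_Ioo fun u hu => ?_
  have hsum : (∑ i, (p * f i) ^ 2).eval u = p.eval u ^ 2 * ∑ i, (f i).eval u ^ 2 := by
    simp only [eval_finsetSum, eval_pow, eval_mul, mul_pow, Finset.mul_sum]
  rw [hsum, ← rpow_mul_betaWeight s hu.1, eval_pow]
  calc _ ≤ p.eval u ^ 2 * (∑ i, (f i).eval u ^ 2) * betaWeight a b u := by
        gcongr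
        exact betaWeight_anti hbb' hu
    _ ≤ p.eval u ^ 2 * (C * (u ^ s + t)) * betaWeight a b u := by
        have := betaWeight_pos (a := a) (b := b) hu
        gcongr
        exact hf u hu
    _ = _ := by ring

lemma exists_integral_shiftedJacobi_mul_rpow_sq_le {r s : ℝ} (hs : 0 ≤ s) (hsr : s ≤ r) :
    ∃ C : ℝ, 0 < C ∧ ∀ (d n : ℕ) (ν : SignedMeasure (Sph d)) (c : ℝ),
      3 ≤ d → d ≤ n → r + 1 ≤ n → IsMZ d (2 * ((d + 2) * n) : ℕ) ν c → ∀ x : Sph d,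
      ∫ y, ((shiftedJacobi (d / 2 + r) (d / 2 - 2) (d * n)).eval ((1 - ip x y) / 2) *
          (1 - ip x y) ^ (s / 2)) ^ 2 ∂ν.totalVariation ≤
        c * (C * (n : ℝ) ^ (2 * (r - s)) * (betaInt (d / 2 + r) (d / 2 - 2 + 1)
          (shiftedJacobi (d / 2 + r) (d / 2 - 2) (d * n) ^ 2) / betaInt (d / 2) (d / 2) 1)) := by
  obtain ⟨A, hA, hmajorant⟩ := exists_sum_sq_majorant_rpow hs
  obtain ⟨G, hG, hmoment⟩ := exists_betaInt_shiftedJacobi_sq_sub_le (hs.trans hsr)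
  refine ⟨2 ^ s * (A * (2 * G)), by positivity, fun d n ν c hd hdn hrn hν x => ?_⟩
  have hd' : (3 : ℝ) ≤ d := by exact_mod_cast hd
  have hn : 0 < n := by omega
  have hc := hν.nonneg (by positivity)
  have hI := betaInt_one_pos (a := d / 2) (b := d / 2) (by positivity) (by positivity)
  obtain ⟨m, f, hdeg, hf⟩ := hmajorant n (by linarith)
  have hs_moment := hmoment d n (r - s) hd hdn hrn (by linarith) (by linarith)
  have hr_moment := hmoment d n r hd hdn hrn (hs.trans hsr) le_rfl
  rw [show (d : ℝ) / 2 + r - (r - s) = d / 2 + s by ring] at hs_moment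
  rw [add_sub_cancel_right] at hr_moment
  have hYdeg := natDegree_shiftedJacobi_le (α := d / 2 + r) (β := d / 2 - 2) (d * n)
  set Y := shiftedJacobi ((d : ℝ) / 2 + r) (d / 2 - 2) (d * n)
  set I := betaInt ((d : ℝ) / 2 + r) (d / 2 - 2 + 1) (Y ^ 2)
  have hYf (i : Fin m) : (Y * f i).natDegree < (d + 2) * n := by
    have := hdeg i
    linarith [natDegree_mul_le (p := Y) (q := f i)]
  have hsum := sum_betaInt_mul_sq_le (a := d / 2) (b := d / 2 - 2 + 1) (b' := d / 2)
    (by linarith) (by linarith) (by linarith) hs Y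
    fun u hu => (hf u (Ioo_subset_Icc_self hu)).2
  have hpow : (n : ℝ) ^ (-(2 * s)) * (n : ℝ) ^ (2 * r) = (n : ℝ) ^ (2 * (r - s)) := by
    rw [← rpow_add (by positivity)]
    ring_nf
  calc _ ≤ c * (2 ^ s / betaInt (d / 2) (d / 2) 1 *
        ∑ i, betaInt (d / 2) (d / 2) ((Y * f i) ^ 2)) :=
        hν.integral_eval_mul_rpow_sq_le (by omega) x hs hYf fun u hu => (hf u hu).1
    _ ≤ c * (2 ^ s / betaInt (d / 2) (d / 2) 1 * (A * (G * (n : ℝ) ^ (2 * (r - s)) * I +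
          (n : ℝ) ^ (-(2 * s)) * (G * (n : ℝ) ^ (2 * r) * I)))) := by
        gcongr
        exact hsum.trans (by gcongr)
    _ = _ := by
        rw [← hpow]
        ring

lemma abs_phiTilde_mul_rpow {n : ℕ} {r s t : ℝ} (hd : 3 ≤ d) (hr : 0 ≤ r) (ht : t ≤ 1) :
    |PhiTilde d n r t| * (1 - t) ^ s = |sphK d ((d + 2) * n) t| *
      |(shiftedJacobi (d / 2 + r) (d / 2 - 2) (d * n)).eval ((1 - t) / 2) * (1 - t) ^ s /
        (shiftedJacobi (d / 2 + r) (d / 2 - 2) (d * n)).eval 0| := by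
  have hd' : (3 : ℝ) ≤ d := by exact_mod_cast hd
  have hscale := jacobiScale_ne_zero (α := d / 2 + r) (β := d / 2 - 2) (by linarith)
    (by linarith) (by linarith) (d * n)
  rw [PhiTilde, jacobiP_eq_eval, jacobiP_eq_eval, sub_self, zero_div,
    mul_div_mul_left _ _ hscale, mul_div_right_comm, abs_mul, abs_mul, mul_assoc,
    abs_of_nonneg (rpow_nonneg (sub_nonneg.2 ht) s)]

lemma IsMZ.integral_abs_phiTilde_mul_rpow_le {n : ℕ} {r s B : ℝ} (hd : 3 ≤ d) (hn : 0 < n)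
    (hr : 0 ≤ r) (hs : 0 ≤ s) (hν : IsMZ d (2 * ((d + 2) * n) : ℕ) ν c) (x : Sph d)
    (hB : ∫ y, ((shiftedJacobi (d / 2 + r) (d / 2 - 2) (d * n)).eval ((1 - ip x y) / 2) *
      (1 - ip x y) ^ s) ^ 2 ∂ν.totalVariation ≤ B) :
    ∫ y, |PhiTilde d n r (ip x y)| * (1 - ip x y) ^ s ∂ν.totalVariation ≤
      √(c * sphK d ((d + 2) * n) 1 *
        (B / (shiftedJacobi (d / 2 + r) (d / 2 - 2) (d * n)).eval 0 ^ 2)) := by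
  have := isFiniteMeasure_totalVariation ν
  have hkernel := hν.integral_sphK_sq_le (by omega) (Nat.mul_pos (by omega) hn) x
  have hip (y : Sph d) : ip x y ≤ 1 := by linarith [(one_sub_ip_div_two_mem_Icc x y).1]
  simp only [abs_phiTilde_mul_rpow hd hr (hip _)]
  set Y := shiftedJacobi ((d : ℝ) / 2 + r) (d / 2 - 2) (d * n)
  refine (integral_abs_mul_abs_le_sqrt ν.totalVariation
    ((continuous_sphK d ((d + 2) * n)).comp (continuous_ip x))
    ((continuous_eval_mul_rpow Y hs x).div_const (Y.eval 0))).trans (Real.sqrt_le_sqrt ?_)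
  simp only [Function.comp_apply, div_pow, integral_div]
  exact mul_le_mul hkernel (div_le_div_of_nonneg_right hB (sq_nonneg _)) (by positivity)
    ((integral_nonneg fun y => sq_nonneg _).trans hkernel)

lemma add_two_mul_le_of_sq_le_mul {a b x : ℝ} (ha : 0 < a) (h : (a + b) ^ 2 ≤ x * a) :
    a + 2 * b ≤ x :=
  le_of_mul_le_mul_right (by nlinarith [sq_nonneg b]) ha

end LebesgueConstant

theorem phiTilde_lebesgue_bound_general :
    ∀ r s : ℝ, 0 ≤ s → s ≤ r → ∃ C : ℝ, 0 < C ∧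
      ∀ (d n : ℕ) (ν : SignedMeasure (Sph d)) (c : ℝ),
        3 ≤ d → d ≤ n → r + 1 ≤ n →
        IsMZ d ((2 * (d + 2) * n : ℕ) : ℝ) ν c →
        ∀ x : Sph d,
          (∫ y, |PhiTilde d n r (ip x y)| * (1 - ip x y) ^ (s / 2) ∂ν.totalVariation) ≤
            C * (n : ℝ) ^ (-s) * c := by
  intro r s hs hsr
  have hr : 0 ≤ r := hs.trans hsr
  obtain ⟨A, hA, hjacobi⟩ := exists_integral_shiftedJacobi_mul_rpow_sq_le hs hsr
  refine ⟨√(A * (2 * exp 3 * (1 + r) ^ (1 + 2 * r))), by positivity,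
    fun d n ν c hd hdn hrn hν x => ?_⟩
  rw [mul_assoc] at hν
  have hn : 0 < n := by omega
  have hn' : (0 : ℝ) < n := by exact_mod_cast hn
  have hc := hν.nonneg (by positivity)
  have hpow : (n : ℝ) ^ (2 * (r - s)) * (n : ℝ) ^ (-(2 * r)) = ((n : ℝ) ^ (-s)) ^ 2 := by
    rw [← rpow_add hn', ← rpow_mul_natCast hn'.le]
    ring_nf
  refine (hν.integral_abs_phiTilde_mul_rpow_le hd hn hr (by positivity) x
    (hjacobi d n ν c hd hdn hrn hν x)).trans (Real.sqrt_le_iff.2 ⟨by positivity, ?_⟩)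
  have hratio := sphK_one_mul_betaInt_shiftedJacobi_sq_le hr hd hdn
  set Y := shiftedJacobi ((d : ℝ) / 2 + r) (d / 2 - 2) (d * n)
  set I := betaInt ((d : ℝ) / 2 + r) (d / 2 - 2 + 1) (Y ^ 2)
  set T := betaInt ((d : ℝ) / 2) (d / 2) 1
  calc _ = c ^ 2 * A * (n : ℝ) ^ (2 * (r - s)) *
        (sphK d ((d + 2) * n) 1 * (I / (T * Y.eval 0 ^ 2))) := by
        rw [← div_div]
        ring
    _ ≤ c ^ 2 * A * (n : ℝ) ^ (2 * (r - s)) *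
        (2 * exp 3 * (1 + r) ^ (1 + 2 * r) * (n : ℝ) ^ (-(2 * r))) := by gcongr
    _ = _ := by
        rw [mul_pow, mul_pow, sq_sqrt (by positivity), ← hpow]
        ring

/-- Lebesgue-constant type estimate for the kernel `Φ̃_{d;n,r}` against a
Marcinkiewicz–Zygmund measure: the constant depends on `r, s` only. -/
theorem phiTilde_lebesgue_bound :
    ∀ r s : ℝ, 0 ≤ s → s ≤ r → ∃ C : ℝ, 0 < C ∧
      ∀ (d n : ℕ) (ν : SignedMeasure (Sph d)) (c : ℝ),
        3 ≤ d → ((d : ℝ) + r + 1) ^ 2 ≤ (n : ℝ) * d →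
        IsMZ d ((2 * (d + 2) * n : ℕ) : ℝ) ν c →
        ∀ x : Sph d,
          (∫ y, |PhiTilde d n r (ip x y)| * (1 - ip x y) ^ (s / 2) ∂ν.totalVariation) ≤
            C * (d : ℝ) ^ ((1 : ℝ)/6) * (n : ℝ) ^ (-s) * c := by
  intro r s hs hsr
  obtain ⟨C, hC, hbound⟩ := phiTilde_lebesgue_bound_general r s hs hsr
  refine ⟨C, hC, fun d n ν c hd hsize hν x => ?_⟩
  have hd' : (1 : ℝ) ≤ d := by exact_mod_cast (by omega : 1 ≤ d)
  rw [add_assoc] at hsize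
  have hle := add_two_mul_le_of_sq_le_mul (by positivity) hsize
  have hdn : d ≤ n := by exact_mod_cast (by linarith : (d : ℝ) ≤ n)
  have hn : 0 < n := by omega
  have hc := hν.nonneg (by positivity)
  refine (hbound d n ν c hd hdn (by linarith) hν x).trans ?_
  gcongr
  exact le_mul_of_one_le_right hC.le (one_le_rpow hd' (by norm_num))

end
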